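/- Let N = 2 and m > 1, and let u be a radial very weak solution of Eq. (E) with radially symmetric initial datum u₀ ∈ L^∞(ℝ²) ∩ C(ℝ²), u₀ ≥ 0, satisfying u₀(0) = K > 0 and lim_{|x|→∞} u₀(x) = 0. Then there exists a continuous function f : ℝ → [0,∞) with lim_{ξ→−∞} f(ξ) = K and lim_{ξ→+∞} f(ξ) = 0, such that, defining the radially symmetric profile W(x,t) = f(log|x| / √t) for x ≠ 0 and W(0,t) = K for all t > 0, one has lim_{t→∞} sup_{x ∈ ℝ²} |u(x,t) − W(x,t)| = 0. In particular, u(0,t) = K for every t > 0, i.e., the value at the origin does not change along the evolution. -/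

import Mathlib

open Real MeasureTheory Set Filter Topology

noncomputable section

/-- `v` (in radial variables: `v r t`, `r = |x|`) is a radial very weak solution of the
nonhomogeneous porous medium equation `|x|^{-2} ∂ₜ u = Δ(u^m)` in dimension `N`,
with initial datum `v₀`: `v` is nonnegative, continuous on `ℝ^N × (0,∞)`, bounded on
`ℝ^N × [0,T]` for every `T`, and satisfies the very weak (integral) formulation against
every nonnegative test function `φ ∈ C^{2,1}` vanishing on the lateral boundary. -/
def IsRadialVeryWeakSolution (N : ℕ) (m : ℝ) (v : ℝ → ℝ → ℝ) (v₀ : ℝ → ℝ) : Prop :=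
  (∀ r t, 0 ≤ v r t) ∧
  ContinuousOn (fun p : ℝ × ℝ => v p.1 p.2) (Set.Ici 0 ×ˢ Set.Ioi 0) ∧
  (∀ T : ℝ, 0 < T → ∃ C : ℝ, ∀ r ∈ Set.Ici (0 : ℝ), ∀ t ∈ Set.Icc (0 : ℝ) T, v r t ≤ C) ∧
  ∀ (r₁ r₂ T : ℝ) (φ φt φr φrr : ℝ → ℝ → ℝ),
    0 < r₁ → r₁ < r₂ → 0 < T →
    (∀ r t, 0 ≤ φ r t) →
    (∀ r t, HasDerivAt (fun τ => φ r τ) (φt r t) t) →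
    (∀ r t, HasDerivAt (fun ρ => φ ρ t) (φr r t) r) →
    (∀ r t, HasDerivAt (fun ρ => φr ρ t) (φrr r t) r) →
    Continuous (fun p : ℝ × ℝ => φ p.1 p.2) →
    Continuous (fun p : ℝ × ℝ => φt p.1 p.2) →
    Continuous (fun p : ℝ × ℝ => φr p.1 p.2) →
    Continuous (fun p : ℝ × ℝ => φrr p.1 p.2) →
    (∀ t ∈ Set.Ico (0 : ℝ) T, φ r₁ t = 0 ∧ φ r₂ t = 0) →
    (∫ t in (0 : ℝ)..T, ∫ r in r₁..r₂,
        (r ^ (-2 : ℝ) * v r t * φt r t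
          + (φrr r t + (((N : ℝ) - 1) / r) * φr r t) * v r t ^ m) * r ^ ((N : ℝ) - 1))
      = (∫ r in r₁..r₂,
          r ^ (-2 : ℝ) * (v r T * φ r T - v₀ r * φ r 0) * r ^ ((N : ℝ) - 1))
        + ∫ t in (0 : ℝ)..T,
            (r₂ ^ ((N : ℝ) - 1) * v r₂ t ^ m * φr r₂ t
              - r₁ ^ ((N : ℝ) - 1) * v r₁ t ^ m * φr r₁ t)

/-!
In the variable `s = log r` the planar equation becomes the porous medium equation `w_t = (wᵐ)_ss`
on the line for `w(s, t) = v(eˢ, t)`, with a datum `w₀` having the limits `K` at `-∞` and `0` at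
`+∞`. Tested against functions that do not depend on time, the very weak formulation says that the
potential `z = ∫₀ᵗ wᵐ` satisfies `z_ss = w - w₀` in the sense of distributions, hence classically.

Let `w, w'` be two solutions with potentials `z, z'` and choose `p` with `p'' = w₀ - w₀'`. Then
`E = z - z' + p` has `E_ss = w - w'` and `E_t = wᵐ - w'ᵐ`, so it solves `E_t = c E_ss` with
`0 ≤ c ≤ L`. This equation preserves concavity, which yields comparison. Comparing `w` with its
scalings gives the Bénilan-Crandall estimate `w_t ≥ -w / ((m - 1) t)`, which makes `wᵐ` convex up to
a parabola and thus locally Lipschitz, uniformly over solutions with a common bound. On the other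
hand, a barrier makes `E` small near a point as soon as the data are close in `L¹` on a large window
around it. Together these bounds make `w` and `w'` pointwise close.

The rescaled solutions `w(lξ, l²t)` have data converging to a step function, in `L¹` on windows
of fixed length and uniformly in the position of the window. They are therefore uniformly Cauchy
at `t = 1`, and their limit is the profile `f`.
-/

/-! ### Functions with a second derivative -/

/-- `g` is twice differentiable on the real line, with second derivative `g''`. -/
structure HasSecondDeriv (g g'' : ℝ → ℝ) : Prop where
  differentiable : Differentiable ℝ g
  hasDerivAt_deriv : ∀ s, HasDerivAt (deriv g) (g'' s) s

namespace HasSecondDeriv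

variable {g h g'' h'' : ℝ → ℝ}

theorem of_hasDerivAt {g' : ℝ → ℝ} (hg : ∀ s, HasDerivAt g (g' s) s)
    (hg' : ∀ s, HasDerivAt g' (g'' s) s) : HasSecondDeriv g g'' where
  differentiable s := (hg s).differentiableAt
  hasDerivAt_deriv := by rwa [show deriv g = g' from funext fun s => (hg s).deriv]

theorem of_contDiff (hg : ContDiff ℝ 2 g) : HasSecondDeriv g (deriv (deriv g)) where
  differentiable := hg.differentiable two_ne_zero
  hasDerivAt_deriv s :=
    ((hg.deriv' (n := 1)).differentiable one_ne_zero s).hasDerivAt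

theorem hasDerivAt (hg : HasSecondDeriv g g'') (s : ℝ) : HasDerivAt g (deriv g s) s :=
  (hg.differentiable s).hasDerivAt

theorem continuous (hg : HasSecondDeriv g g'') : Continuous g :=
  hg.differentiable.continuous

theorem deriv_deriv (hg : HasSecondDeriv g g'') : deriv (deriv g) = g'' :=
  funext fun s => (hg.hasDerivAt_deriv s).deriv

theorem quadratic (a b c : ℝ) :
    HasSecondDeriv (fun s => a * s ^ 2 + b * s + c) (fun _ => 2 * a) :=
  of_hasDerivAt (g' := fun s => 2 * a * s + b)
    (fun s => ((((hasDerivAt_pow 2 s).const_mul a).add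
      ((hasDerivAt_id s).const_mul b)).add_const c).congr_deriv (by simp; ring))
    (fun s => (((hasDerivAt_id s).const_mul (2 * a)).add_const b).congr_deriv (by simp))

theorem add (hg : HasSecondDeriv g g'') (hh : HasSecondDeriv h h'') :
    HasSecondDeriv (fun s => g s + h s) (fun s => g'' s + h'' s) :=
  of_hasDerivAt (fun s => (hg.hasDerivAt s).add (hh.hasDerivAt s))
    (fun s => (hg.hasDerivAt_deriv s).add (hh.hasDerivAt_deriv s))

theorem const_mul (c : ℝ) (hg : HasSecondDeriv g g'') :
    HasSecondDeriv (fun s => c * g s) (fun s => c * g'' s) :=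
  of_hasDerivAt (fun s => (hg.hasDerivAt s).const_mul c)
    (fun s => (hg.hasDerivAt_deriv s).const_mul c)

theorem sub (hg : HasSecondDeriv g g'') (hh : HasSecondDeriv h h'') :
    HasSecondDeriv (fun s => g s - h s) (fun s => g'' s - h'' s) :=
  of_hasDerivAt (fun s => (hg.hasDerivAt s).sub (hh.hasDerivAt s))
    (fun s => (hg.hasDerivAt_deriv s).sub (hh.hasDerivAt_deriv s))

theorem comp_mul_add (hg : HasSecondDeriv g g'') (l b : ℝ) :
    HasSecondDeriv (fun s => g (l * s + b)) (fun s => l ^ 2 * g'' (l * s + b)) := by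
  have hl (s : ℝ) : HasDerivAt (fun s => l * s + b) l s := by
    simpa using ((hasDerivAt_id s).const_mul l).add_const b
  refine of_hasDerivAt (g' := fun s => l * deriv g (l * s + b)) (fun s => ?_) fun s => ?_
  · exact ((hg.hasDerivAt _).comp s (hl s)).congr_deriv (mul_comm _ _)
  · exact (((hg.hasDerivAt_deriv _).comp s (hl s)).const_mul l).congr_deriv (by ring)

theorem nonneg_of_isLocalMin (hg : HasSecondDeriv g g'') {a : ℝ} (ha : IsLocalMin g a) :
    0 ≤ g'' a := by
  by_contra! hneg
  have hmax : IsLocalMax g a := isLocalMax_of_deriv_deriv_neg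
    (by rwa [hg.deriv_deriv]) ha.deriv_eq_zero (hg.hasDerivAt a).continuousAt
  have hconst : g =ᶠ[𝓝 a] fun _ => g a := by
    filter_upwards [ha, hmax] with x hx hx' using le_antisymm hx' hx
  have hzero : deriv (deriv g) a = 0 := by simp [hconst.deriv.deriv_eq]
  rw [hg.deriv_deriv] at hzero
  exact hneg.ne hzero

theorem convexOn {D : Set ℝ} (hg : HasSecondDeriv g g'') (hD : Convex ℝ D)
    (hnonneg : ∀ s ∈ D, 0 ≤ g'' s) : ConvexOn ℝ D g :=
  convexOn_of_deriv2_nonneg' hD hg.differentiable.differentiableOn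
    (fun s _ => (hg.hasDerivAt_deriv s).differentiableAt.differentiableWithinAt)
    (by simpa [hg.deriv_deriv] using hnonneg)

theorem concaveOn (hg : HasSecondDeriv g g'') (hnonpos : ∀ s, g'' s ≤ 0) :
    ConcaveOn ℝ univ g :=
  concaveOn_univ_of_deriv2_nonpos hg.differentiable
    (fun s => (hg.hasDerivAt_deriv s).differentiableAt)
    (by simpa [hg.deriv_deriv] using hnonpos)

theorem nonpos_of_concaveOn (hg : HasSecondDeriv g g'') (hconc : ConcaveOn ℝ univ g) (s : ℝ) :
    g'' s ≤ 0 := by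
  have hanti : Antitone (deriv g) := antitoneOn_univ.1 <|
    hconc.antitoneOn_deriv fun x _ => hg.differentiable x
  rw [← hg.deriv_deriv]
  exact hanti.deriv_nonpos

theorem mul_sq_le_second_difference (hg : HasSecondDeriv g g'') {κ x δ : ℝ}
    (hδ : 0 ≤ δ) (hκ : ∀ s ∈ Icc (x - δ) (x + δ), κ ≤ g'' s) :
    κ * δ ^ 2 ≤ g (x + δ) + g (x - δ) - 2 * g x := by
  have hconv : ConvexOn ℝ (Icc (x - δ) (x + δ))
      (fun s => g s - (κ / 2 * s ^ 2 + -(κ * x) * s + 0)) :=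
    (hg.sub (quadratic (κ / 2) (-(κ * x)) 0)).convexOn (convex_Icc _ _)
      fun s hs => by linarith [hκ s hs]
  have hmid := hconv.2 (left_mem_Icc.2 (by linarith)) (right_mem_Icc.2 (by linarith))
    one_half_pos.le one_half_pos.le (add_halves 1)
  rw [smul_eq_mul, smul_eq_mul, show 1 / 2 * (x - δ) + 1 / 2 * (x + δ) = x by ring] at hmid
  simp only [smul_eq_mul] at hmid
  nlinarith

end HasSecondDeriv

theorem nonpos_of_hasDerivAt_of_isMinOn_Icc {f : ℝ → ℝ} {c a b : ℝ} (hab : a < b)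
    (hf : HasDerivAt f c b) (hmin : IsMinOn f (Icc a b) b) : c ≤ 0 := by
  have h : Tendsto (slope f b) (𝓝[<] b) (𝓝 c) :=
    (hasDerivAt_iff_tendsto_slope.1 hf).mono_left (nhdsWithin_mono _ fun x hx => ne_of_lt hx)
  refine le_of_tendsto h ?_
  filter_upwards [Ioo_mem_nhdsLT hab] with x hx
  rw [slope_def_field]
  exact div_nonpos_of_nonneg_of_nonpos (sub_nonneg.2 (hmin ⟨hx.1.le, hx.2.le⟩))
    (sub_nonpos.2 hx.2.le)

/-- The gap `(y - x) g(q) - (y - q) g(x) - (q - x) g(y)` between `g` and its secant over `[x, y]` at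
the point `q`, scaled by `y - x` so that it is affine in the values of `g` and free of quotients. -/
def secantGap (g : ℝ → ℝ) (x q y : ℝ) : ℝ :=
  (y - x) * g q - (y - q) * g x - (q - x) * g y

theorem concaveOn_univ_iff_secantGap_nonneg {g : ℝ → ℝ} :
    ConcaveOn ℝ univ g ↔ ∀ x q y, x ≤ q → q ≤ y → 0 ≤ secantGap g x q y := by
  rw [concaveOn_iff_slope_anti_adjacent]
  constructor
  · rintro ⟨-, h⟩ x q y hxq hqy
    rcases hxq.eq_or_lt with rfl | hxq
    · simp [secantGap]
    rcases hqy.eq_or_lt with rfl | hqy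
    · simp [secantGap]
    have := h (mem_univ x) (mem_univ y) hxq hqy
    rw [div_le_div_iff₀ (by linarith) (by linarith)] at this
    rw [secantGap]
    linarith
  · refine fun h => ⟨convex_univ, fun {x q y} _ _ hxq hqy => ?_⟩
    rw [div_le_div_iff₀ (by linarith) (by linarith)]
    have := h x q y hxq.le hqy.le
    rw [secantGap] at this
    linarith

/-- The primitive of the primitive of `g`, both vanishing at `s₀`. -/
def doublePrimitive (g : ℝ → ℝ) (s₀ s : ℝ) : ℝ :=
  ∫ x in s₀..s, ∫ y in s₀..x, g y

section DoublePrimitive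

variable {g : ℝ → ℝ}

theorem hasSecondDeriv_doublePrimitive (hg : Continuous g) (s₀ : ℝ) :
    HasSecondDeriv (doublePrimitive g s₀) g :=
  .of_hasDerivAt (g' := fun s => ∫ y in s₀..s, g y)
    (fun s => ((intervalIntegral.continuous_primitive
      (fun a b => hg.intervalIntegrable a b) s₀).integral_hasStrictDerivAt s₀ s).hasDerivAt)
    (fun s => (hg.integral_hasStrictDerivAt s₀ s).hasDerivAt)

theorem uIoc_subset_Ioc_of_abs_sub_le {s₀ s ρ : ℝ} (hs : |s - s₀| ≤ ρ) :
    uIoc s₀ s ⊆ Ioc (s₀ - ρ) (s₀ + ρ) := by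
  rw [abs_le] at hs
  rcases le_total s₀ s with h | h
  · rw [uIoc_of_le h]
    exact Ioc_subset_Ioc (by linarith) (by linarith)
  · rw [uIoc_of_ge h]
    exact Ioc_subset_Ioc (by linarith) (by linarith)

theorem abs_doublePrimitive_le (hg : Continuous g) {s₀ s ρ : ℝ} (hs : |s - s₀| ≤ ρ) :
    |doublePrimitive g s₀ s| ≤ ρ * ∫ y in (s₀ - ρ)..(s₀ + ρ), |g y| := by
  have hρ : 0 ≤ ρ := (abs_nonneg _).trans hs
  have hI : 0 ≤ ∫ y in (s₀ - ρ)..(s₀ + ρ), |g y| :=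
    intervalIntegral.integral_nonneg (by linarith) fun _ _ => abs_nonneg _
  have hprim : ∀ x ∈ uIoc s₀ s, ‖∫ y in s₀..x, g y‖ ≤ ∫ y in (s₀ - ρ)..(s₀ + ρ), |g y| := by
    intro x hx
    have hx' : |x - s₀| ≤ ρ := by
      have := uIoc_subset_Ioc_of_abs_sub_le hs hx
      exact abs_le.2 ⟨by linarith [this.1], by linarith [this.2]⟩
    refine intervalIntegral.norm_integral_le_integral_norm_uIoc.trans ?_
    rw [intervalIntegral.integral_of_le (by linarith)]
    exact setIntegral_mono_set (hg.abs.integrableOn_Ioc)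
      (ae_of_all _ fun _ => abs_nonneg _) (uIoc_subset_Ioc_of_abs_sub_le hx').eventuallyLE
  calc |doublePrimitive g s₀ s|
      ≤ (∫ y in (s₀ - ρ)..(s₀ + ρ), |g y|) * |s - s₀| :=
        intervalIntegral.norm_integral_le_of_norm_le_const hprim
    _ ≤ ρ * ∫ y in (s₀ - ρ)..(s₀ + ρ), |g y| := by rw [mul_comm]; gcongr

end DoublePrimitive

/-! ### Distributional second derivatives -/

section Distributional

open scoped Convolution

variable {g z h ρ p q : ℝ → ℝ}

theorem HasSecondDeriv.eq_of_zero (hg : HasSecondDeriv g 0) (s : ℝ) :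
    g s = (1 - s) * g 0 + s * g 1 := by
  have hderiv (x : ℝ) : deriv g x = deriv g 0 :=
    is_const_of_deriv_eq_zero (fun x => (hg.hasDerivAt_deriv x).differentiableAt)
      (fun x => congrFun hg.deriv_deriv x) x 0
  have hline (x : ℝ) : HasDerivAt (fun x => g x - deriv g 0 * x) 0 x :=
    ((hg.hasDerivAt x).sub ((hasDerivAt_id x).const_mul (deriv g 0))).congr_deriv (by simp [hderiv])
  have hconst := is_const_of_deriv_eq_zero (fun x => (hline x).differentiableAt)
    fun x => (hline x).deriv
  linear_combination hconst s 0 - s * hconst 1 0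

theorem hasSecondDeriv_convolution (hρ : ContDiff ℝ 2 ρ) (hρc : HasCompactSupport ρ)
    (hh : LocallyIntegrable h) :
    HasSecondDeriv (ρ ⋆[ContinuousLinearMap.lsmul ℝ ℝ] h)
      (deriv (deriv ρ) ⋆[ContinuousLinearMap.lsmul ℝ ℝ] h) :=
  .of_hasDerivAt (hρc.hasDerivAt_convolution_left _ (hρ.of_le one_le_two) hh)
    (hρc.deriv.hasDerivAt_convolution_left _ (hρ.deriv' (n := 1)) hh)

theorem convolution_deriv_deriv (ρ h : ℝ → ℝ) (x : ℝ) :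
    (deriv (deriv ρ) ⋆[ContinuousLinearMap.lsmul ℝ ℝ] h) x =
      ∫ s, h s * deriv (deriv fun s => ρ (x - s)) s := by
  rw [convolution_lsmul_swap]
  refine integral_congr_ae (ae_of_all _ fun s => ?_)
  have hderiv : deriv (fun s => ρ (x - s)) = fun s => -deriv ρ (x - s) :=
    funext fun s => deriv_comp_const_sub ..
  simp [hderiv, deriv_comp_const_sub, mul_comm]

theorem eq_of_integral_mul_deriv_deriv_eq_zero (hh : Continuous h)
    (hint : ∀ q : ℝ → ℝ, ContDiff ℝ 2 q → HasCompactSupport q → (∀ s, 0 ≤ q s) →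
      ∫ s, h s * deriv (deriv q) s = 0) (s : ℝ) : h s = (1 - s) * h 0 + s * h 1 := by
  let φ (n : ℕ) : ContDiffBump (0 : ℝ) :=
    ⟨1 / (n + 1) / 2, 1 / (n + 1), by positivity, half_lt_self (by positivity)⟩
  let G (n : ℕ) := (φ n).normed volume ⋆[ContinuousLinearMap.lsmul ℝ ℝ] h
  have hG (x : ℝ) : Tendsto (fun n => G n x) atTop (𝓝 (h x)) :=
    ContDiffBump.convolution_tendsto_right_of_continuous
      tendsto_one_div_add_atTop_nhds_zero_nat hh x
  have haffine (n : ℕ) : G n s = (1 - s) * G n 0 + s * G n 1 := by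
    have hφ : ContDiff ℝ 2 ((φ n).normed volume) := (φ n).contDiff_normed (n := 2)
    refine HasSecondDeriv.eq_of_zero ?_ s
    convert hasSecondDeriv_convolution hφ (φ n).hasCompactSupport_normed hh.locallyIntegrable
      using 1
    funext x
    rw [convolution_deriv_deriv, Pi.zero_apply]
    exact (hint _ (hφ.comp (contDiff_const.sub contDiff_id))
      ((φ n).hasCompactSupport_normed.comp_homeomorph (Homeomorph.subLeft x))
      fun s => (φ n).nonneg_normed _).symm
  exact tendsto_nhds_unique ((hG s).congr haffine) (((hG 0).const_mul _).add ((hG 1).const_mul _))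

theorem HasSecondDeriv.integral_mul_deriv_deriv (hp : HasSecondDeriv p g) (hg : Continuous g)
    (hq : ContDiff ℝ 2 q) (hqc : HasCompactSupport q) :
    ∫ s, p s * deriv (deriv q) s = ∫ s, g s * q s := by
  have hp' : Continuous (deriv p) :=
    continuous_iff_continuousAt.2 fun s => (hp.hasDerivAt_deriv s).continuousAt
  have hq' := HasSecondDeriv.of_contDiff hq
  have hq₁ : Continuous (deriv q) := hq.continuous_deriv one_le_two
  have hq₂ : Continuous (deriv (deriv q)) := (hq.deriv' (n := 1)).continuous_deriv le_rfl
  have hintegrable {u v : ℝ → ℝ} (hu : Continuous u) (hv : Continuous v)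
      (hvc : HasCompactSupport v) : Integrable (u * v) :=
    (hu.mul hv).integrable_of_hasCompactSupport hvc.mul_left
  rw [integral_mul_deriv_eq_deriv_mul_of_integrable (fun s _ => hp.hasDerivAt s)
      (fun s _ => hq'.hasDerivAt_deriv s) (hintegrable hp.continuous hq₂ hqc.deriv.deriv)
      (hintegrable hp' hq₁ hqc.deriv) (hintegrable hp.continuous hq₁ hqc.deriv),
    integral_mul_deriv_eq_deriv_mul_of_integrable (fun s _ => hp.hasDerivAt_deriv s)
      (fun s _ => hq'.hasDerivAt s) (hintegrable hp' hq₁ hqc.deriv)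
      (hintegrable hg hq.continuous hqc) (hintegrable hp' hq.continuous hqc), neg_neg]

theorem hasSecondDeriv_of_integral_mul_deriv_deriv (hz : Continuous z) (hg : Continuous g)
    (hint : ∀ q : ℝ → ℝ, ContDiff ℝ 2 q → HasCompactSupport q → (∀ s, 0 ≤ q s) →
      ∫ s, z s * deriv (deriv q) s = ∫ s, g s * q s) : HasSecondDeriv z g := by
  have hp := hasSecondDeriv_doublePrimitive hg 0
  set p := doublePrimitive g 0
  have hzp : Continuous fun s => z s - p s := hz.sub hp.continuous
  have haffine := eq_of_integral_mul_deriv_deriv_eq_zero hzp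
    fun q hq hqc hq0 => by
      have hq₂ : Continuous (deriv (deriv q)) := (hq.deriv' (n := 1)).continuous_deriv le_rfl
      have hintegrable {u : ℝ → ℝ} (hu : Continuous u) :
          Integrable (fun s => u s * deriv (deriv q) s) :=
        (hu.mul hq₂).integrable_of_hasCompactSupport hqc.deriv.deriv.mul_left
      simp only [sub_mul]
      rw [integral_sub (hintegrable hz) (hintegrable hp.continuous), hint q hq hqc hq0,
        hp.integral_mul_deriv_deriv hg hq hqc, sub_self]
  convert hp.add (HasSecondDeriv.quadratic 0 ((z 1 - p 1) - (z 0 - p 0)) (z 0 - p 0))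
    using 2 with s s
  · linear_combination haffine s
  · simp

end Distributional

/-! ### Degenerate parabolic equations -/

/-- `E` solves `E_t = c E_ss` on `ℝ × (0, T]`, where `E'' = E_ss` and the coefficient `c` takes
values in `[0, L]`. No regularity of `c` is assumed, so it is not recorded as a function. -/
structure IsDegenerateParabolic (L T : ℝ) (E E'' : ℝ → ℝ → ℝ) : Prop where
  continuousOn : ContinuousOn (fun P : ℝ × ℝ => E P.1 P.2) (univ ×ˢ Icc 0 T)
  hasSecondDeriv : ∀ t ∈ Ioc 0 T, HasSecondDeriv (E · t) (E'' · t)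
  hasDerivAt_time : ∀ s, ∀ t ∈ Ioc 0 T, ∃ c ∈ Icc 0 L, HasDerivAt (E s) (c * E'' s t) t

namespace IsDegenerateParabolic

variable {L T : ℝ} {E E'' : ℝ → ℝ → ℝ}

theorem neg (hE : IsDegenerateParabolic L T E E'') :
    IsDegenerateParabolic L T (fun s t => -E s t) (fun s t => -E'' s t) where
  continuousOn := hE.continuousOn.neg
  hasSecondDeriv t ht := by simpa using (hE.hasSecondDeriv t ht).const_mul (-1)
  hasDerivAt_time s t ht := by
    obtain ⟨c, hc, h⟩ := hE.hasDerivAt_time s t ht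
    exact ⟨c, hc, h.neg.congr_deriv (mul_neg _ _).symm⟩

/-- The quadratic barrier `η + a ((s - s₀)² + (2 L + 1) t)` is a strict supersolution of every
equation `E_t = c E_ss` with `0 ≤ c ≤ L`. -/
def barrier (L a η s₀ s t : ℝ) : ℝ :=
  η + a * ((s - s₀) ^ 2 + (2 * L + 1) * t)

theorem not_isMinOn_barrier_sub (hE : IsDegenerateParabolic L T E E'') {a η s₀ ρ s t : ℝ}
    (ha : 0 < a) (hs : s ∈ Ioo (s₀ - ρ) (s₀ + ρ)) (ht : t ∈ Ioc 0 T) :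
    ¬ IsMinOn (fun P : ℝ × ℝ => barrier L a η s₀ P.1 P.2 - E P.1 P.2)
      (Icc (s₀ - ρ) (s₀ + ρ) ×ˢ Icc 0 T) (s, t) := by
  intro hmin
  have hspace : 0 ≤ 2 * a - E'' s t := by
    refine ((HasSecondDeriv.quadratic a (-(2 * a * s₀))
      (η + a * (s₀ ^ 2 + (2 * L + 1) * t))).sub
      (hE.hasSecondDeriv t ht)).nonneg_of_isLocalMin (a := s) ?_
    filter_upwards [Icc_mem_nhds hs.1 hs.2] with x hx
    have := isMinOn_iff.1 hmin (x, t) ⟨hx, ht.1.le, ht.2⟩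
    simp only [barrier] at this
    linarith
  obtain ⟨c, hc, hderiv⟩ := hE.hasDerivAt_time s t ht
  have htime : a * (2 * L + 1) - c * E'' s t ≤ 0 := by
    refine nonpos_of_hasDerivAt_of_isMinOn_Icc (f := fun t => barrier L a η s₀ s t - E s t) ht.1
      (HasDerivAt.sub ?_ hderiv) fun τ hτ =>
        hmin (a := (s, τ)) ⟨Ioo_subset_Icc_self hs, hτ.1, hτ.2.trans ht.2⟩
    exact (((((hasDerivAt_id t).const_mul (2 * L + 1)).const_add ((s - s₀) ^ 2)).const_mul
      a).const_add η).congr_deriv (by simp)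
  nlinarith [mul_nonneg hc.1 hspace, mul_nonneg ha.le (sub_nonneg.2 hc.2)]

theorem le_barrier (hE : IsDegenerateParabolic L T E E'') (hL : 0 ≤ L) {A η s₀ ρ : ℝ} (hA : 0 < A)
    (hρ : 0 < ρ) (hinit : ∀ s ∈ Icc (s₀ - ρ) (s₀ + ρ), E s 0 ≤ η)
    (hbound : ∀ s ∈ Icc (s₀ - ρ) (s₀ + ρ), ∀ t ∈ Icc 0 T, E s t ≤ η + A) {s t : ℝ}
    (hs : s ∈ Icc (s₀ - ρ) (s₀ + ρ)) (ht : t ∈ Icc 0 T) :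
    E s t ≤ barrier L (A / ρ ^ 2) η s₀ s t := by
  have ha : 0 < A / ρ ^ 2 := by positivity
  obtain ⟨⟨y, τ⟩, ⟨hy, hτ⟩, hmin⟩ :=
    (isCompact_Icc.prod isCompact_Icc).exists_isMinOn ⟨(s, t), hs, ht⟩
    (f := fun P : ℝ × ℝ => barrier L (A / ρ ^ 2) η s₀ P.1 P.2 - E P.1 P.2)
    (by unfold barrier
        exact ContinuousOn.sub (by fun_prop)
          (hE.continuousOn.mono (by gcongr; exact subset_univ _)))
  refine sub_nonneg.1 (le_trans ?_ (hmin (a := (s, t)) ⟨hs, ht⟩))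
  by_contra! hneg
  simp only [barrier, sub_neg] at hneg
  have hpos : 0 ≤ (2 * L + 1) * τ := mul_nonneg (by linarith) hτ.1
  have hτ0 : τ ≠ 0 := by
    rintro rfl
    nlinarith [hinit y hy, sq_nonneg (y - s₀)]
  have hnotmem : (y - s₀) ^ 2 < ρ ^ 2 := by
    have hA' : A / ρ ^ 2 * ρ ^ 2 = A := div_mul_cancel₀ _ (by positivity)
    by_contra! hfar
    nlinarith [hbound y hy τ hτ, mul_nonneg ha.le hpos, mul_le_mul_of_nonneg_left hfar ha.le]
  have hy' := abs_lt.1 (abs_lt_of_sq_lt_sq hnotmem hρ.le)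
  exact hE.not_isMinOn_barrier_sub ha ⟨by linarith [hy'.1], by linarith [hy'.2]⟩
    ⟨hτ.1.lt_of_ne' hτ0, hτ.2⟩ hmin

/-- Ordered triples `x ≤ q ≤ y` together with a time in `[0, T]`. -/
def orderedTriples (T : ℝ) : Set (ℝ × ℝ × ℝ × ℝ) :=
  {P | P.1 ≤ P.2.1 ∧ P.2.1 ≤ P.2.2.1 ∧ P.2.2.2 ∈ Icc 0 T}

/-- The secant gap of `E`, penalized so that it attains its minimum and so that this minimum
cannot be negative when `E` solves `E_t = c E_ss` with `0 ≤ c ≤ L`. -/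
def penalizedGap (E : ℝ → ℝ → ℝ) (L ε : ℝ) : ℝ × ℝ × ℝ × ℝ → ℝ := fun (x, q, y, t) =>
  secantGap (E · t) x q y + ε * (x ^ 2 + q ^ 2 + y ^ 2 + (6 * L + 1) * t)

theorem isClosed_orderedTriples : IsClosed (orderedTriples T) := by
  have hq : Continuous fun P : ℝ × ℝ × ℝ × ℝ => P.2.1 := by fun_prop
  have ht : Continuous fun P : ℝ × ℝ × ℝ × ℝ => P.2.2.2 := by fun_prop
  exact (isClosed_le continuous_fst hq).inter
    ((isClosed_le hq (by fun_prop)).inter (isClosed_Icc.preimage ht))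

theorem continuousOn_penalizedGap
    (hE : ContinuousOn (fun P : ℝ × ℝ => E P.1 P.2) (univ ×ˢ Icc 0 T)) (L ε : ℝ) :
    ContinuousOn (penalizedGap E L ε) (orderedTriples T) := by
  have hcomp {f : ℝ × ℝ × ℝ × ℝ → ℝ} (hf : Continuous f) :
      ContinuousOn (fun P => E (f P) P.2.2.2) (orderedTriples T) :=
    hE.comp (f := fun P : ℝ × ℝ × ℝ × ℝ => (f P, P.2.2.2)) (by fun_prop)
      fun P hP => ⟨mem_univ _, hP.2.2⟩
  have hx := hcomp (f := fun P => P.1) (by fun_prop)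
  have hq := hcomp (f := fun P => P.2.1) (by fun_prop)
  have hy := hcomp (f := fun P => P.2.2.1) (by fun_prop)
  refine (((ContinuousOn.mul ?_ hq).sub (.mul ?_ hx)).sub (.mul ?_ hy)).add ?_ <;> fun_prop

theorem exists_isMinOn_penalizedGap
    (hE : ContinuousOn (fun P : ℝ × ℝ => E P.1 P.2) (univ ×ˢ Icc 0 T)) (hT : 0 ≤ T) (hL : 0 ≤ L)
    {B ε : ℝ} (hε : 0 < ε) (hB : 0 ≤ B)
    (hgap : ∀ x q y, ∀ t ∈ Icc 0 T, x ≤ q → q ≤ y →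
      -(2 * B * (y - x)) ≤ secantGap (E · t) x q y) :
    ∃ P ∈ orderedTriples T, IsMinOn (penalizedGap E L ε) (orderedTriples T) P := by
  have horigin : (0, 0, 0, 0) ∈ orderedTriples T := ⟨le_rfl, le_rfl, le_rfl, hT⟩
  refine (continuousOn_penalizedGap hE L ε).exists_isMinOn' isClosed_orderedTriples horigin ?_
  let R := 3 * B / ε
  have hbox : IsCompact (Icc (-R) R ×ˢ Icc (-R) R ×ˢ Icc (-R) R ×ˢ Icc 0 T) :=
    isCompact_Icc.prod (isCompact_Icc.prod (isCompact_Icc.prod isCompact_Icc))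
  filter_upwards [inter_mem_inf hbox.compl_mem_cocompact (mem_principal_self _)]
    with ⟨x, q, y, t⟩ ⟨hout, hxq, hqy, ht⟩
  simp only [penalizedGap, secantGap] at hout hxq hqy ht hgap ⊢
  by_contra! hneg
  have hsq : (ε * x) ^ 2 + (ε * q) ^ 2 + (ε * y) ^ 2 ≤ (3 * B) ^ 2 := by
    have := hgap x q y t ht hxq hqy
    have htime : 0 ≤ ε * ((6 * L + 1) * t) := by have := ht.1; positivity
    nlinarith [sq_nonneg (ε * x + 2 * B), sq_nonneg (ε * y - 2 * B)]
  have hR {a : ℝ} (ha : (ε * a) ^ 2 ≤ (3 * B) ^ 2) : a ∈ Icc (-R) R := by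
    rw [mem_Icc, ← abs_le, le_div_iff₀ hε, mul_comm, ← abs_of_pos hε, ← abs_mul]
    exact abs_le_of_sq_le_sq ha (by positivity)
  exact hout ⟨hR (by nlinarith), hR (by nlinarith), hR (by nlinarith), ht⟩

section Minimum

variable {ε x q y t : ℝ}

theorem secondDeriv_left_le_of_isMinOn (hE : HasSecondDeriv (E · t) (E'' · t))
    (hP : (x, q, y, t) ∈ orderedTriples T) (hxq : x < q)
    (hmin : IsMinOn (penalizedGap E L ε) (orderedTriples T) (x, q, y, t)) :
    (y - q) * E'' x t ≤ 2 * ε := by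
  have hlin := HasSecondDeriv.quadratic ε (E y t - E q t)
    (y * E q t - q * E y t + ε * (q ^ 2 + y ^ 2 + (6 * L + 1) * t))
  have := (hlin.sub (hE.const_mul (y - q))).nonneg_of_isLocalMin (a := x) (by
    filter_upwards [Iio_mem_nhds hxq] with x' hx'
    have := isMinOn_iff.1 hmin (x', q, y, t) ⟨hx'.le, hP.2⟩
    simp only [penalizedGap, secantGap] at this
    linarith)
  linarith

theorem neg_le_secondDeriv_middle_of_isMinOn (hE : HasSecondDeriv (E · t) (E'' · t))
    (hP : (x, q, y, t) ∈ orderedTriples T) (hxq : x < q) (hqy : q < y)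
    (hmin : IsMinOn (penalizedGap E L ε) (orderedTriples T) (x, q, y, t)) :
    -(2 * ε) ≤ (y - x) * E'' q t := by
  have hlin := HasSecondDeriv.quadratic ε (E x t - E y t)
    (x * E y t - y * E x t + ε * (x ^ 2 + y ^ 2 + (6 * L + 1) * t))
  have := (hlin.add (hE.const_mul (y - x))).nonneg_of_isLocalMin (a := q) (by
    filter_upwards [Ioo_mem_nhds hxq hqy] with q' hq'
    have := isMinOn_iff.1 hmin (x, q', y, t) ⟨hq'.1.le, hq'.2.le, hP.2.2⟩
    simp only [penalizedGap, secantGap] at this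
    linarith)
  linarith

theorem secondDeriv_right_le_of_isMinOn (hE : HasSecondDeriv (E · t) (E'' · t))
    (hP : (x, q, y, t) ∈ orderedTriples T) (hqy : q < y)
    (hmin : IsMinOn (penalizedGap E L ε) (orderedTriples T) (x, q, y, t)) :
    (q - x) * E'' y t ≤ 2 * ε := by
  have hlin := HasSecondDeriv.quadratic ε (E q t - E x t)
    (q * E x t - x * E q t + ε * (x ^ 2 + q ^ 2 + (6 * L + 1) * t))
  have := (hlin.sub (hE.const_mul (q - x))).nonneg_of_isLocalMin (a := y) (by
    filter_upwards [Ioi_mem_nhds hqy] with y' hy'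
    have := isMinOn_iff.1 hmin (x, q, y', t) ⟨hP.1, hy'.le, hP.2.2⟩
    simp only [penalizedGap, secantGap] at this
    linarith)
  linarith

theorem time_deriv_le_of_isMinOn {dx dq dy : ℝ} (hx : HasDerivAt (E x) dx t)
    (hq : HasDerivAt (E q) dq t) (hy : HasDerivAt (E y) dy t)
    (hP : (x, q, y, t) ∈ orderedTriples T) (ht : 0 < t)
    (hmin : IsMinOn (penalizedGap E L ε) (orderedTriples T) (x, q, y, t)) :
    (y - x) * dq - (y - q) * dx - (q - x) * dy + ε * (6 * L + 1) ≤ 0 := by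
  refine nonpos_of_hasDerivAt_of_isMinOn_Icc (f := fun τ => penalizedGap E L ε (x, q, y, τ)) ht ?_
    fun τ hτ => hmin (a := (x, q, y, τ)) ⟨hP.1, hP.2.1, hτ.1, hτ.2.trans hP.2.2.2⟩
  exact ((((hq.const_mul (y - x)).sub (hx.const_mul (y - q))).sub (hy.const_mul (q - x))).add
    ((((hasDerivAt_id t).const_mul (6 * L + 1)).const_add (x ^ 2 + q ^ 2 + y ^ 2)).const_mul
      ε)).congr_deriv (by simp)

end Minimum

theorem nonneg_of_isMinOn_penalizedGap (hE : IsDegenerateParabolic L T E E'')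
    (hinit : ConcaveOn ℝ univ (E · 0)) (hL : 0 ≤ L) {ε : ℝ} (hε : 0 < ε) {P : ℝ × ℝ × ℝ × ℝ}
    (hP : P ∈ orderedTriples T) (hmin : IsMinOn (penalizedGap E L ε) (orderedTriples T) P) :
    0 ≤ penalizedGap E L ε P := by
  obtain ⟨x, q, y, t⟩ := P
  have hpenalty : 0 ≤ ε * (x ^ 2 + q ^ 2 + y ^ 2 + (6 * L + 1) * t) := by
    have : 0 ≤ t := hP.2.2.1
    positivity
  have of_gap_nonneg (h : 0 ≤ secantGap (E · t) x q y) : 0 ≤ penalizedGap E L ε (x, q, y, t) :=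
    add_nonneg h hpenalty
  have ⟨(hxq : x ≤ q), (hqy : q ≤ y), (ht : 0 ≤ t), (htT : t ≤ T)⟩ := hP
  rcases ht.eq_or_lt with rfl | ht
  · exact of_gap_nonneg (concaveOn_univ_iff_secantGap_nonneg.1 hinit x q y hxq hqy)
  rcases hxq.eq_or_lt with rfl | hxq
  · exact of_gap_nonneg (by simp [secantGap])
  rcases hqy.eq_or_lt with rfl | hqy
  · exact of_gap_nonneg (by simp [secantGap])
  exfalso
  have hEss := hE.hasSecondDeriv t ⟨ht, htT⟩
  obtain ⟨cx, ⟨hcx, hcxL⟩, htx⟩ := hE.hasDerivAt_time x t ⟨ht, htT⟩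
  obtain ⟨cq, ⟨hcq, hcqL⟩, htq⟩ := hE.hasDerivAt_time q t ⟨ht, htT⟩
  obtain ⟨cy, ⟨hcy, hcyL⟩, hty⟩ := hE.hasDerivAt_time y t ⟨ht, htT⟩
  have hx := mul_le_mul_of_nonneg_left (secondDeriv_left_le_of_isMinOn hEss hP hxq hmin) hcx
  have hq := mul_le_mul_of_nonneg_left
    (neg_le_secondDeriv_middle_of_isMinOn hEss hP hxq hqy hmin) hcq
  have hy := mul_le_mul_of_nonneg_left (secondDeriv_right_le_of_isMinOn hEss hP hqy hmin) hcy
  have htime := time_deriv_le_of_isMinOn htx htq hty hP ht hmin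
  nlinarith

theorem concaveOn_of_concaveOn_zero (hE : IsDegenerateParabolic L T E E'') (hL : 0 ≤ L)
    (hinit : ConcaveOn ℝ univ (E · 0)) {B : ℝ} (hB : ∀ s, ∀ t ∈ Icc 0 T, |E s t - E s 0| ≤ B)
    {t : ℝ} (ht : t ∈ Icc 0 T) : ConcaveOn ℝ univ (E · t) := by
  have hB0 : 0 ≤ B := (abs_nonneg _).trans (hB 0 t ht)
  have hgap : ∀ x q y, ∀ t ∈ Icc 0 T, x ≤ q → q ≤ y →
      -(2 * B * (y - x)) ≤ secantGap (E · t) x q y := by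
    intro x q y t ht hxq hqy
    have h0 := concaveOn_univ_iff_secantGap_nonneg.1 hinit x q y hxq hqy
    have hx := (abs_le.1 (hB x t ht)).2
    have hq := (abs_le.1 (hB q t ht)).1
    have hy := (abs_le.1 (hB y t ht)).2
    simp only [secantGap] at h0 ⊢
    nlinarith [mul_nonneg (sub_nonneg.2 (hxq.trans hqy)) (by linarith : 0 ≤ E q t - E q 0 + B),
      mul_nonneg (sub_nonneg.2 hqy) (by linarith : 0 ≤ B - (E x t - E x 0)),
      mul_nonneg (sub_nonneg.2 hxq) (by linarith : 0 ≤ B - (E y t - E y 0))]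
  refine concaveOn_univ_iff_secantGap_nonneg.2 fun x q y hxq hqy => ?_
  have hpen : ∀ ε > 0, 0 ≤ penalizedGap E L ε (x, q, y, t) := by
    intro ε hε
    obtain ⟨P, hP, hmin⟩ := exists_isMinOn_penalizedGap hE.continuousOn (ht.1.trans ht.2) hL hε
      hB0 hgap
    exact (hE.nonneg_of_isMinOn_penalizedGap hinit hL hε hP hmin).trans
      (isMinOn_iff.1 hmin _ ⟨hxq, hqy, ht⟩)
  have hlim : Tendsto (fun ε => penalizedGap E L ε (x, q, y, t)) (𝓝[>] 0)
      (𝓝 (secantGap (E · t) x q y)) := by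
    have : Continuous fun ε => penalizedGap E L ε (x, q, y, t) := by
      unfold penalizedGap; fun_prop
    simpa [penalizedGap] using (this.tendsto 0).mono_left nhdsWithin_le_nhds
  exact ge_of_tendsto hlim (eventually_mem_nhdsWithin.mono hpen)

end IsDegenerateParabolic

/-! ### Solutions of the one-dimensional equation, integrated in time -/

theorem exists_rpow_sub_rpow_eq_mul {m M a b : ℝ} (hm : 1 ≤ m) (ha : a ∈ Icc 0 M)
    (hb : b ∈ Icc 0 M) : ∃ c ∈ Icc 0 (m * M ^ (m - 1)), a ^ m - b ^ m = c * (a - b) := by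
  wlog hab : a ≤ b generalizing a b
  · obtain ⟨c, hc, h⟩ := this hb ha (le_of_not_ge hab)
    exact ⟨c, hc, by linarith⟩
  rcases hab.eq_or_lt with rfl | hab
  · have := ha.1.trans ha.2
    exact ⟨0, ⟨le_rfl, by positivity⟩, by simp⟩
  obtain ⟨ξ, hξ, hslope⟩ := exists_hasDerivAt_eq_slope (fun x => x ^ m) (fun x => m * x ^ (m - 1))
    hab (continuous_rpow_const (by linarith)).continuousOn
    (fun x _ => hasDerivAt_rpow_const (Or.inr hm))
  have hξ0 : 0 ≤ ξ := ha.1.trans hξ.1.le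
  refine ⟨m * ξ ^ (m - 1), ⟨by positivity, ?_⟩, ?_⟩
  · have := rpow_le_rpow hξ0 (hξ.2.le.trans hb.2) (sub_nonneg.2 hm)
    gcongr
  · rw [hslope]
    field_simp [sub_ne_zero.2 hab.ne']
    ring

theorem abs_sub_rpow_le {m a b : ℝ} (hm : 1 ≤ m) (ha : 0 ≤ a) (hb : 0 ≤ b) :
    |a - b| ^ m ≤ |a ^ m - b ^ m| := by
  wlog hab : b ≤ a generalizing a b
  · rw [abs_sub_comm, abs_sub_comm (a ^ m)]
    exact this hb ha (le_of_not_ge hab)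
  have hadd := add_rpow_le_rpow_add (sub_nonneg.2 hab) hb hm
  rw [sub_add_cancel] at hadd
  rw [abs_of_nonneg (sub_nonneg.2 hab)]
  exact (le_sub_iff_add_le.2 hadd).trans (le_abs_self _)

/-- The time integral `∫₀ᵗ w(s, τ)ᵐ dτ`, whose second derivative in `s` is `w(·, t) - w₀` when `w`
solves `w_t = (wᵐ)_ss` with initial datum `w₀`. -/
def timePotential (m : ℝ) (w : ℝ → ℝ → ℝ) (s t : ℝ) : ℝ :=
  ∫ τ in (0 : ℝ)..t, w s τ ^ m

/-- `w` is a bounded nonnegative solution of the porous medium equation `w_t = (wᵐ)_ss` on the line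
with initial datum `w₀`, in the form obtained by integrating the equation over `(0, t)`. The initial
condition is encoded by the occurrence of `w₀` in `hasSecondDeriv`. -/
structure IsIntegratedSolution (m : ℝ) (w : ℝ → ℝ → ℝ) (w₀ : ℝ → ℝ) : Prop where
  nonneg : ∀ s t, 0 ≤ w s t
  continuousOn_time : ∀ s, ContinuousOn (w s) (Ioi 0)
  bounded : ∀ T > 0, ∃ C, ∀ s, ∀ t ∈ Ioc 0 T, w s t ≤ C
  continuous_initial : Continuous w₀
  hasSecondDeriv : ∀ t > 0, HasSecondDeriv (timePotential m w · t) (fun s => w s t - w₀ s)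

@[simp]
theorem timePotential_zero (m : ℝ) (w : ℝ → ℝ → ℝ) (s : ℝ) : timePotential m w s 0 = 0 :=
  intervalIntegral.integral_same

namespace IsIntegratedSolution

variable {m T M : ℝ} {w w' : ℝ → ℝ → ℝ} {w₀ w₀' : ℝ → ℝ}

theorem rpow_nonneg (h : IsIntegratedSolution m w w₀) (s t : ℝ) : 0 ≤ w s t ^ m :=
  Real.rpow_nonneg (h.nonneg s t) m

theorem norm_rpow_le (h : IsIntegratedSolution m w w₀) (hm : 0 ≤ m)
    (hM : ∀ s, ∀ t ∈ Ioc 0 T, w s t ≤ M) (s : ℝ) {t : ℝ} (ht : t ∈ Ioc 0 T) :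
    ‖w s t ^ m‖ ≤ M ^ m := by
  rw [norm_of_nonneg (h.rpow_nonneg s t)]
  exact rpow_le_rpow (h.nonneg s t) (hM s t ht) hm

theorem continuousOn_rpow (h : IsIntegratedSolution m w w₀) (hm : 0 ≤ m) (s : ℝ) :
    ContinuousOn (fun t => w s t ^ m) (Ioi 0) :=
  (h.continuousOn_time s).rpow_const fun _ _ => Or.inr hm

theorem intervalIntegrable_rpow (h : IsIntegratedSolution m w w₀) (hm : 0 ≤ m) (s : ℝ) {a b : ℝ}
    (ha : 0 ≤ a) (hb : 0 ≤ b) : IntervalIntegrable (fun t => w s t ^ m) volume a b := by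
  have hzero {t : ℝ} (ht : 0 ≤ t) : IntervalIntegrable (fun t => w s t ^ m) volume 0 t := by
    rcases ht.eq_or_lt with rfl | ht
    · exact .refl
    obtain ⟨C, hC⟩ := h.bounded t ht
    rw [intervalIntegrable_iff_integrableOn_Ioc_of_le ht.le]
    exact Integrable.of_bound (((h.continuousOn_rpow hm s).mono
      Ioc_subset_Ioi_self).aestronglyMeasurable measurableSet_Ioc) (C ^ m)
      ((ae_restrict_mem measurableSet_Ioc).mono fun τ hτ => h.norm_rpow_le hm hC s hτ)
  exact (hzero ha).symm.trans (hzero hb)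

theorem hasDerivAt_timePotential (h : IsIntegratedSolution m w w₀) (hm : 0 ≤ m) (s : ℝ) {t : ℝ}
    (ht : 0 < t) : HasDerivAt (timePotential m w s) (w s t ^ m) t :=
  intervalIntegral.integral_hasDerivAt_right (h.intervalIntegrable_rpow hm s le_rfl ht.le)
    ((h.continuousOn_rpow hm s).stronglyMeasurableAtFilter isOpen_Ioi t ht)
    ((h.continuousOn_rpow hm s).continuousAt (Ioi_mem_nhds ht))

theorem abs_timePotential_sub_le (h : IsIntegratedSolution m w w₀) (hm : 0 ≤ m)
    (hM : ∀ s, ∀ t ∈ Ioc 0 T, w s t ≤ M) (s : ℝ) {a b : ℝ} (ha : a ∈ Icc 0 T)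
    (hb : b ∈ Icc 0 T) :
    |timePotential m w s a - timePotential m w s b| ≤ M ^ m * |a - b| := by
  rw [timePotential, timePotential, intervalIntegral.integral_interval_sub_left
    (h.intervalIntegrable_rpow hm s le_rfl ha.1) (h.intervalIntegrable_rpow hm s le_rfl hb.1)]
  rw [← norm_eq_abs]
  refine intervalIntegral.norm_integral_le_of_norm_le_const fun t ht => ?_
  have ht' : t ∈ Ioc 0 T := Ioc_subset_Ioc (le_min hb.1 ha.1) (max_le hb.2 ha.2) ht
  exact h.norm_rpow_le hm hM s ht'

theorem timePotential_mem_Icc (h : IsIntegratedSolution m w w₀) (hm : 0 ≤ m)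
    (hM : ∀ s, ∀ t ∈ Ioc 0 T, w s t ≤ M) (hM0 : 0 ≤ M) (s : ℝ) {t : ℝ} (ht : t ∈ Icc 0 T) :
    timePotential m w s t ∈ Icc 0 (M ^ m * T) := by
  refine ⟨intervalIntegral.integral_nonneg ht.1 fun τ _ => h.rpow_nonneg s τ, ?_⟩
  have := h.abs_timePotential_sub_le hm hM s ht (left_mem_Icc.2 (ht.1.trans ht.2))
  rw [timePotential_zero, sub_zero, sub_zero, abs_of_nonneg ht.1] at this
  exact (le_abs_self _).trans (this.trans (by gcongr; exact ht.2))

theorem continuousOn_timePotential (h : IsIntegratedSolution m w w₀) (hm : 0 ≤ m) (hT : 0 < T) :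
    ContinuousOn (fun P : ℝ × ℝ => timePotential m w P.1 P.2) (univ ×ˢ Icc 0 T) := by
  obtain ⟨M, hM⟩ := h.bounded T hT
  have hMm : 0 ≤ M ^ m := (norm_nonneg _).trans (h.norm_rpow_le hm hM 0 (right_mem_Ioc.2 hT))
  refine continuousOn_prod_of_continuousOn_lipschitzOnWith' (K := (M ^ m).toNNReal) _
    (fun s _ => ?_) fun t ht => ?_
  · refine .of_dist_le_mul fun a ha b hb => ?_
    rw [coe_toNNReal _ hMm]
    exact h.abs_timePotential_sub_le hm hM s ha hb
  · rcases ht.1.eq_or_lt with rfl | ht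
    · simp only [timePotential_zero]
      exact continuousOn_const
    · exact (h.hasSecondDeriv t ht).continuous.continuousOn

theorem mul_initial_le (h : IsIntegratedSolution m w w₀) (hm : 0 ≤ m) {κ β : ℝ}
    (hw : ∀ s, ∀ t ∈ Ioc 0 1, κ * w s t ≤ β) (x : ℝ) : κ * w₀ x ≤ β := by
  by_contra! hx
  have hz (s : ℝ) : Tendsto (timePotential m w s) (𝓝[>] 0) (𝓝 0) := by
    have hc : ContinuousWithinAt (timePotential m w s) (Icc 0 1) 0 :=
      (h.continuousOn_timePotential hm one_pos).comp (f := fun t => (s, t)) (by fun_prop)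
        (fun t ht => ⟨mem_univ s, ht⟩) 0 (left_mem_Icc.2 zero_le_one)
    simpa using (hc.mono_of_mem_nhdsWithin (Icc_mem_nhdsGT one_pos)).tendsto
  obtain ⟨γ, hβγ, hγ⟩ := exists_between hx
  obtain ⟨δ, hδ, hw₀⟩ : ∃ δ > 0, Icc (x - δ) (x + δ) ⊆ {s | γ < κ * w₀ s} := by
    simpa only [Real.closedBall_eq_Icc] using Metric.nhds_basis_closedBall.mem_iff.1
      ((h.continuous_initial.const_mul κ).continuousAt.eventually_const_lt hγ)
  have hdiff : ∀ᶠ t in 𝓝[>] 0, (γ - β) * δ ^ 2 ≤ -κ * timePotential m w (x + δ) t +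
      -κ * timePotential m w (x - δ) t - 2 * (-κ * timePotential m w x t) := by
    filter_upwards [Ioc_mem_nhdsGT one_pos] with t ht
    refine ((h.hasSecondDeriv t ht.1).const_mul (-κ)).mul_sq_le_second_difference hδ.le
      fun s hs => ?_
    have hγs : γ < κ * w₀ s := hw₀ hs
    linarith [hw s t ht]
  have hle := ge_of_tendsto ((((hz (x + δ)).const_mul (-κ)).add ((hz (x - δ)).const_mul (-κ))).sub
    (((hz x).const_mul (-κ)).const_mul 2)) hdiff
  nlinarith [mul_pos (sub_pos.2 hβγ) (pow_pos hδ 2)]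

theorem initial_nonneg (h : IsIntegratedSolution m w w₀) (hm : 0 ≤ m) (x : ℝ) : 0 ≤ w₀ x := by
  simpa using h.mul_initial_le hm (κ := -1) (β := 0) (fun s t _ => by simpa using h.nonneg s t) x

theorem exists_pos_forall_initial_le (h : IsIntegratedSolution m w w₀) (hm : 0 ≤ m) :
    ∃ M > 0, ∀ s, w₀ s ≤ M := by
  obtain ⟨C, hC⟩ := h.bounded 1 one_pos
  refine ⟨max C 1, by positivity, fun s => ?_⟩
  simpa using h.mul_initial_le hm (κ := 1) (β := max C 1)
    (fun s t ht => by simpa using Or.inl (hC s t ht)) s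

theorem hasSecondDeriv_timePotential_sub_add (h : IsIntegratedSolution m w w₀)
    (h' : IsIntegratedSolution m w' w₀') {t : ℝ} (ht : 0 < t) {p : ℝ → ℝ}
    (hp : HasSecondDeriv p (fun s => w₀ s - w₀' s)) :
    HasSecondDeriv (fun s => timePotential m w s t - timePotential m w' s t + p s)
      (fun s => w s t - w' s t) := by
  convert ((h.hasSecondDeriv t ht).sub (h'.hasSecondDeriv t ht)).add hp using 2
  ring

theorem isDegenerateParabolic_sub_add (h : IsIntegratedSolution m w w₀)
    (h' : IsIntegratedSolution m w' w₀') (hm : 1 ≤ m) (hT : 0 < T)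
    (hM : ∀ s, ∀ t ∈ Ioc 0 T, w s t ≤ M) (hM' : ∀ s, ∀ t ∈ Ioc 0 T, w' s t ≤ M) {p : ℝ → ℝ}
    (hp : HasSecondDeriv p (fun s => w₀ s - w₀' s)) :
    IsDegenerateParabolic (m * M ^ (m - 1)) T
      (fun s t => timePotential m w s t - timePotential m w' s t + p s)
      (fun s t => w s t - w' s t) where
  continuousOn := by
    have hm0 : 0 ≤ m := by linarith
    exact ((h.continuousOn_timePotential hm0 hT).sub (h'.continuousOn_timePotential hm0 hT)).add
      (hp.continuous.comp continuous_fst).continuousOn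
  hasSecondDeriv t ht := h.hasSecondDeriv_timePotential_sub_add h' ht.1 hp
  hasDerivAt_time s t ht := by
    have hm0 : 0 ≤ m := by linarith
    obtain ⟨c, hc, heq⟩ := exists_rpow_sub_rpow_eq_mul hm ⟨h.nonneg s t, hM s t ht⟩
      ⟨h'.nonneg s t, hM' s t ht⟩
    exact ⟨c, hc, heq ▸ ((h.hasDerivAt_timePotential hm0 s ht.1).sub
      (h'.hasDerivAt_timePotential hm0 s ht.1)).add_const (p s)⟩

theorem exists_common_bound (h : IsIntegratedSolution m w w₀) (h' : IsIntegratedSolution m w' w₀')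
    (hT : 0 < T) : ∃ M ≥ 0, (∀ s, ∀ t ∈ Ioc 0 T, w s t ≤ M) ∧ ∀ s, ∀ t ∈ Ioc 0 T, w' s t ≤ M := by
  obtain ⟨C, hC⟩ := h.bounded T hT
  obtain ⟨C', hC'⟩ := h'.bounded T hT
  have hT' : T ∈ Ioc 0 T := right_mem_Ioc.2 hT
  exact ⟨max C C', ((h.nonneg 0 T).trans (hC 0 T hT')).trans (le_max_left _ _),
    fun s t ht => (hC s t ht).trans (le_max_left _ _),
    fun s t ht => (hC' s t ht).trans (le_max_right _ _)⟩

theorem abs_timePotential_sub_timePotential_le (h : IsIntegratedSolution m w w₀)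
    (h' : IsIntegratedSolution m w' w₀') (hm : 0 ≤ m) (hM0 : 0 ≤ M)
    (hM : ∀ s, ∀ t ∈ Ioc 0 T, w s t ≤ M) (hM' : ∀ s, ∀ t ∈ Ioc 0 T, w' s t ≤ M) (s : ℝ) {t : ℝ}
    (ht : t ∈ Icc 0 T) : |timePotential m w s t - timePotential m w' s t| ≤ M ^ m * T := by
  have hz := h.timePotential_mem_Icc hm hM hM0 s ht
  have hz' := h'.timePotential_mem_Icc hm hM' hM0 s ht
  exact abs_le.2 ⟨by linarith [hz.1, hz'.2], by linarith [hz.2, hz'.1]⟩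

theorem mono_initial (h : IsIntegratedSolution m w w₀) (h' : IsIntegratedSolution m w' w₀')
    (hm : 1 ≤ m) (hle : ∀ s, w₀ s ≤ w₀' s) (s : ℝ) {t : ℝ} (ht : 0 < t) : w s t ≤ w' s t := by
  obtain ⟨M, hM0, hM, hM'⟩ := h.exists_common_bound h' ht
  have hm0 : 0 ≤ m := by linarith
  have hp := hasSecondDeriv_doublePrimitive (h.continuous_initial.sub h'.continuous_initial) 0
  have hE := h.isDegenerateParabolic_sub_add h' hm ht hM hM' hp
  have hconc : ConcaveOn ℝ univ (fun s => timePotential m w s t - timePotential m w' s t +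
      doublePrimitive (fun s => w₀ s - w₀' s) 0 s) := by
    refine hE.concaveOn_of_concaveOn_zero (by positivity) ?_ (B := M ^ m * t) (fun s τ hτ => ?_)
      (right_mem_Icc.2 ht.le)
    · simpa using hp.concaveOn fun s => sub_nonpos.2 (hle s)
    · simpa using h.abs_timePotential_sub_timePotential_le h' hm0 hM0 hM hM' s hτ
  exact sub_nonpos.1 ((hE.hasSecondDeriv t (right_mem_Ioc.2 ht)).nonpos_of_concaveOn hconc s)

theorem const {b : ℝ} (hb : 0 ≤ b) : IsIntegratedSolution m (fun _ _ => b) (fun _ => b) where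
  nonneg _ _ := hb
  continuousOn_time _ := continuousOn_const
  bounded _ _ := ⟨b, fun _ _ _ => le_rfl⟩
  continuous_initial := continuous_const
  hasSecondDeriv t _ := by
    simpa [timePotential] using HasSecondDeriv.quadratic 0 0 (t * b ^ m)

theorem le_of_initial_le (h : IsIntegratedSolution m w w₀) (hm : 1 ≤ m) {b : ℝ}
    (hb : ∀ s, w₀ s ≤ b) (s : ℝ) {t : ℝ} (ht : 0 < t) : w s t ≤ b :=
  h.mono_initial (const ((h.initial_nonneg (by linarith) 0).trans (hb 0))) hm hb s ht

theorem timePotential_scale (h : IsIntegratedSolution m w w₀) {c μ : ℝ} (hc : 0 < c)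
    (hμ : 0 < μ) (l b s t : ℝ) :
    timePotential m (fun s t => c * w (l * s + b) (μ * t)) s t =
      c ^ m / μ * timePotential m w (l * s + b) (μ * t) := by
  simp only [timePotential, mul_rpow hc.le (h.nonneg _ _)]
  rw [intervalIntegral.integral_const_mul,
    intervalIntegral.integral_comp_mul_left (fun τ => w (l * s + b) τ ^ m) hμ.ne', mul_zero,
    smul_eq_mul]
  ring

theorem scale (h : IsIntegratedSolution m w w₀) {c μ l : ℝ} (hc : 0 < c) (hμ : 0 < μ)
    (hscale : c ^ m * l ^ 2 = c * μ) (b : ℝ) :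
    IsIntegratedSolution m (fun s t => c * w (l * s + b) (μ * t))
      (fun s => c * w₀ (l * s + b)) where
  nonneg s t := mul_nonneg hc.le (h.nonneg _ _)
  continuousOn_time s := continuousOn_const.mul <|
    (h.continuousOn_time _).comp (by fun_prop) fun t ht => mul_pos hμ ht
  bounded T hT := by
    obtain ⟨C, hC⟩ := h.bounded (μ * T) (by positivity)
    refine ⟨c * C, fun s t ht => ?_⟩
    have := hC (l * s + b) (μ * t) ⟨mul_pos hμ ht.1, by gcongr; exact ht.2⟩
    gcongr
  continuous_initial := by have := h.continuous_initial; fun_prop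
  hasSecondDeriv t ht := by
    simp only [h.timePotential_scale hc hμ]
    convert ((h.hasSecondDeriv (μ * t) (mul_pos hμ ht)).comp_mul_add l b).const_mul (c ^ m / μ)
      using 2 with s
    linear_combination (-(w (l * s + b) (μ * t) - w₀ (l * s + b)) / μ) * hscale +
      (c * (w₀ (l * s + b) - w (l * s + b) (μ * t))) * (mul_inv_cancel₀ hμ.ne')

theorem le_rpow_mul_of_one_le (h : IsIntegratedSolution m w w₀) (hm : 1 < m) {μ : ℝ} (hμ : 1 ≤ μ)
    (s : ℝ) {t : ℝ} (ht : 0 < t) : w s t ≤ μ ^ (1 / (m - 1)) * w s (μ * t) := by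
  have hm1 : 0 < m - 1 := sub_pos.2 hm
  have hc : 1 ≤ μ ^ (1 / (m - 1)) := one_le_rpow hμ (by positivity)
  have hscale : (μ ^ (1 / (m - 1))) ^ m * 1 ^ 2 = μ ^ (1 / (m - 1)) * μ := by
    rw [one_pow, mul_one, ← rpow_mul (by linarith), ← rpow_add_one (by linarith)]
    congr 1
    field_simp
    ring
  simpa using h.mono_initial (h.scale (by positivity) (by linarith) hscale 0) hm.le
    (fun y => by simpa using le_mul_of_one_le_left (h.initial_nonneg (by linarith) y) hc) s ht

theorem time_difference_ge (h : IsIntegratedSolution m w w₀) (hm : 1 < m) (s : ℝ) {t τ : ℝ}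
    (ht : 0 < t) (hτ : 0 ≤ τ) :
    -(τ / ((m - 1) * t)) * w s t ≤ w s (t + τ) - w s t := by
  have hm1 : 0 < m - 1 := sub_pos.2 hm
  have hμ : 0 < 1 + τ / t := by positivity
  have hle : w s t ≤ (1 + τ / t) ^ (1 / (m - 1)) * w s (t + τ) := by
    convert h.le_rpow_mul_of_one_le hm (μ := 1 + τ / t)
      (le_add_of_nonneg_right (by positivity)) s ht using 3
    field_simp
  have hbernoulli : 1 - τ / ((m - 1) * t) ≤ (1 + τ / t) ^ (-(1 / (m - 1))) := by
    rw [rpow_def_of_pos hμ]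
    have hlog := mul_le_mul_of_nonneg_right (log_le_sub_one_of_pos hμ) (one_div_pos.2 hm1).le
    have hexp := add_one_le_exp (log (1 + τ / t) * -(1 / (m - 1)))
    have : τ / ((m - 1) * t) = τ / t * (1 / (m - 1)) := by field_simp
    linarith
  calc -(τ / ((m - 1) * t)) * w s t = (1 - τ / ((m - 1) * t)) * w s t - w s t := by ring
    _ ≤ (1 + τ / t) ^ (-(1 / (m - 1))) * ((1 + τ / t) ^ (1 / (m - 1)) * w s (t + τ)) - w s t := by
        gcongr
        exact h.nonneg s t
    _ = w s (t + τ) - w s t := by rw [← mul_assoc, ← rpow_add hμ]; simp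

-- The time derivative of `wᵐ` controls `(wᵐ)_ss` only in the sense of difference quotients: these
-- are convex up to a fixed parabola, and convexity survives in the limit.
theorem convexOn_rpow_add_sq (h : IsIntegratedSolution m w w₀) (hm : 1 < m) {t : ℝ} (ht : 0 < t)
    (hM : ∀ s, w s t ≤ M) (x₀ : ℝ) :
    ConvexOn ℝ univ (fun s => w s t ^ m + M / (2 * (m - 1) * t) * (s - x₀) ^ 2) := by
  have hm1 : 0 < m - 1 := sub_pos.2 hm
  set k := M / (2 * (m - 1) * t) with hk
  have hquot : ∀ τ > 0, ConvexOn ℝ univ (fun s =>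
      τ⁻¹ * (timePotential m w s (t + τ) - timePotential m w s t) + k * (s - x₀) ^ 2) := by
    intro τ hτ
    have hsecond := (((h.hasSecondDeriv (t + τ) (by linarith)).sub
      (h.hasSecondDeriv t ht)).const_mul τ⁻¹).add
      (HasSecondDeriv.quadratic k (-(2 * k * x₀)) (k * x₀ ^ 2))
    refine (hsecond.convexOn convex_univ fun s _ => ?_).congr fun s _ => by ring
    have hinc := h.time_difference_ge hm s ht hτ.le
    have hbound : τ / ((m - 1) * t) * w s t ≤ τ / ((m - 1) * t) * M := by
      gcongr
      exact hM s
    have hkτ : τ / ((m - 1) * t) * M = τ * (2 * k) := by rw [hk]; field_simp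
    have hdiff : -(2 * k) ≤ τ⁻¹ * (w s (t + τ) - w s t) := by
      rw [le_inv_mul_iff₀ hτ]
      linarith
    linarith
  have hlim : Tendsto (fun τ s =>
      τ⁻¹ * (timePotential m w s (t + τ) - timePotential m w s t) + k * (s - x₀) ^ 2) (𝓝[>] 0)
      (𝓝 fun s => w s t ^ m + k * (s - x₀) ^ 2) :=
    tendsto_pi_nhds.2 fun s =>
      (h.hasDerivAt_timePotential (by linarith) s ht).tendsto_slope_zero_right.add_const _
  exact isClosed_setOfPred_convexOn.mem_of_tendsto hlim
    (eventually_mem_nhdsWithin.mono fun τ hτ => hquot τ hτ)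

theorem abs_rpow_sub_rpow_le (h : IsIntegratedSolution m w w₀) (hm : 1 < m) {t : ℝ} (ht : 0 < t)
    (hM : ∀ s, w s t ≤ M) {s x₀ : ℝ} (hs : |s - x₀| < 1) :
    |w s t ^ m - w x₀ t ^ m| ≤ (2 * M ^ m + 9 * (M / (2 * (m - 1) * t))) * |s - x₀| := by
  have : 0 < m - 1 := sub_pos.2 hm
  have hM0 : 0 ≤ M := (h.nonneg 0 t).trans (hM 0)
  set k := M / (2 * (m - 1) * t)
  have hk0 : 0 ≤ k := by positivity
  have hbound : ∀ y, dist y x₀ < 2 → |w y t ^ m + k * (y - x₀) ^ 2| ≤ M ^ m + k * 2 ^ 2 := by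
    intro y hy
    have hsq : (y - x₀) ^ 2 ≤ 2 ^ 2 := sq_le_sq' (by linarith [(abs_lt.1 hy).1]) (abs_lt.1 hy).2.le
    rw [abs_of_nonneg (add_nonneg (h.rpow_nonneg y t) (by positivity))]
    gcongr
    · exact h.nonneg y t
    · exact hM y
  have hlip := ((h.convexOn_rpow_add_sq hm ht hM x₀).subset (subset_univ _)
    (convex_ball x₀ 2)).lipschitzOnWith_of_abs_le one_pos hbound
  have hdist := hlip.dist_le_mul s (by norm_num [Metric.mem_ball, Real.dist_eq, hs]) x₀
    (by norm_num)
  rw [coe_toNNReal _ (by positivity), Real.dist_eq, Real.dist_eq, sub_self] at hdist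
  have hsq : k * (s - x₀) ^ 2 ≤ k * |s - x₀| := by
    rw [← sq_abs]
    gcongr
    nlinarith [abs_nonneg (s - x₀)]
  rw [abs_le] at hdist ⊢
  constructor <;> nlinarith [hdist.1, hdist.2, mul_nonneg hk0 (sq_nonneg (s - x₀))]

theorem exists_forall_abs_sub_le (hm : 1 < m) (hM : 0 ≤ M) {t σ : ℝ} (ht : 0 < t) (hσ : 0 < σ) :
    ∃ δ ∈ Ioo (0 : ℝ) 1, ∀ w w₀, IsIntegratedSolution m w w₀ → (∀ s, w s t ≤ M) →
      ∀ s x, |s - x| ≤ δ → |w s t - w x t| ≤ σ := by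
  have : 0 < m - 1 := sub_pos.2 hm
  set Λ := 2 * M ^ m + 9 * (M / (2 * (m - 1) * t))
  have hΛ : 0 ≤ Λ := by positivity
  refine ⟨min (1 / 2) (σ ^ m / (Λ + 1)), ⟨by positivity, (min_le_left _ _).trans_lt (by norm_num)⟩,
    fun w w₀ h hM s x hsx => ?_⟩
  have hdist : |s - x| ≤ σ ^ m / (Λ + 1) := hsx.trans (min_le_right _ _)
  refine (rpow_le_rpow_iff (abs_nonneg _) hσ.le (by linarith : 0 < m)).1 ?_
  calc |w s t - w x t| ^ m ≤ |w s t ^ m - w x t ^ m| :=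
        abs_sub_rpow_le hm.le (h.nonneg s t) (h.nonneg x t)
    _ ≤ Λ * |s - x| :=
        h.abs_rpow_sub_rpow_le hm ht hM (hsx.trans_lt ((min_le_left _ _).trans_lt (by norm_num)))
    _ ≤ (Λ + 1) * (σ ^ m / (Λ + 1)) := by gcongr; linarith
    _ = σ ^ m := by field_simp

theorem abs_timePotential_sub_add_le_barrier (h : IsIntegratedSolution m w w₀)
    (h' : IsIntegratedSolution m w' w₀') (hm : 1 ≤ m) (hT : 0 < T) (hM0 : 0 < M)
    (hM : ∀ s, ∀ t ∈ Ioc 0 T, w s t ≤ M) (hM' : ∀ s, ∀ t ∈ Ioc 0 T, w' s t ≤ M) {s₀ s ρ η : ℝ}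
    (hρ : 0 < ρ) (hη : ∫ y in (s₀ - ρ)..(s₀ + ρ), |w₀ y - w₀' y| ≤ η)
    (hs : s ∈ Icc (s₀ - ρ) (s₀ + ρ)) :
    |timePotential m w s T - timePotential m w' s T + doublePrimitive (fun y => w₀ y - w₀' y) s₀ s|
      ≤ IsDegenerateParabolic.barrier (m * M ^ (m - 1)) (M ^ m * T / ρ ^ 2) (ρ * η) s₀ s T := by
  have hw₀ : Continuous (fun y => w₀ y - w₀' y) := h.continuous_initial.sub h'.continuous_initial
  have hp : ∀ y ∈ Icc (s₀ - ρ) (s₀ + ρ), |doublePrimitive (fun y => w₀ y - w₀' y) s₀ y| ≤ ρ * η :=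
    fun y hy => (abs_doublePrimitive_le hw₀
      (abs_sub_comm y s₀ ▸ mem_Icc_iff_abs_le.2 hy)).trans (by gcongr)
  have hE := h.isDegenerateParabolic_sub_add h' hm hT hM hM'
    (hasSecondDeriv_doublePrimitive hw₀ s₀)
  have hbound : ∀ y ∈ Icc (s₀ - ρ) (s₀ + ρ), ∀ t ∈ Icc 0 T,
      |timePotential m w y t - timePotential m w' y t +
        doublePrimitive (fun y => w₀ y - w₀' y) s₀ y| ≤ ρ * η + M ^ m * T := fun y hy t ht => by
    rw [add_comm (ρ * η)]
    exact (abs_add_le _ _).trans (add_le_add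
      (h.abs_timePotential_sub_timePotential_le h' (by linarith) hM0.le hM hM' y ht) (hp y hy))
  have hL : 0 ≤ m * M ^ (m - 1) := by positivity
  have hA : 0 < M ^ m * T := by positivity
  refine abs_le'.2 ⟨hE.le_barrier hL hA hρ (fun y hy => ?_)
    (fun y hy t ht => (le_abs_self _).trans (hbound y hy t ht)) hs (right_mem_Icc.2 hT.le),
    hE.neg.le_barrier hL hA hρ (fun y hy => ?_)
    (fun y hy t ht => (neg_le_abs _).trans (hbound y hy t ht)) hs (right_mem_Icc.2 hT.le)⟩
  · simpa using (le_abs_self _).trans (hp y hy)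
  · simpa using (neg_le_abs _).trans (hp y hy)

theorem exists_forall_abs_timePotential_sub_add_le (hm : 1 ≤ m) (hM : 0 < M) (hT : 0 < T) {θ : ℝ}
    (hθ : 0 < θ) : ∃ ρ > 0, ∃ η > 0, ∀ w w' w₀ w₀',
      IsIntegratedSolution m w w₀ → IsIntegratedSolution m w' w₀' →
      (∀ s, w₀ s ≤ M) → (∀ s, w₀' s ≤ M) → ∀ s₀,
      ∫ y in (s₀ - ρ)..(s₀ + ρ), |w₀ y - w₀' y| ≤ η → ∀ s ∈ Icc (s₀ - 1) (s₀ + 1),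
        |timePotential m w s T - timePotential m w' s T +
          doublePrimitive (fun y => w₀ y - w₀' y) s₀ s| ≤ θ := by
  set L := m * M ^ (m - 1)
  obtain ⟨ρ, hρθ, hρ1⟩ : ∃ ρ : ℝ, M ^ m * T / ρ ^ 2 * (1 + (2 * L + 1) * T) < θ / 2 ∧ 1 ≤ ρ := by
    have hlim : Tendsto (fun ρ : ℝ => M ^ m * T / ρ ^ 2 * (1 + (2 * L + 1) * T)) atTop (𝓝 0) := by
      simpa using ((tendsto_pow_atTop two_ne_zero).const_div_atTop (M ^ m * T)).mul_const
        (1 + (2 * L + 1) * T)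
    exact ((hlim.eventually_lt_const (half_pos hθ)).and (eventually_ge_atTop 1)).exists
  refine ⟨ρ, by positivity, θ / (2 * ρ), by positivity,
    fun w w' w₀ w₀' h h' hM₀ hM₀' s₀ hη s hs => ?_⟩
  refine (h.abs_timePotential_sub_add_le_barrier h' hm hT hM
    (fun y t ht => h.le_of_initial_le hm hM₀ y ht.1)
    (fun y t ht => h'.le_of_initial_le hm hM₀' y ht.1) (by linarith) hη
    ⟨by linarith [hs.1], by linarith [hs.2]⟩).trans ?_
  calc IsDegenerateParabolic.barrier L (M ^ m * T / ρ ^ 2) (ρ * (θ / (2 * ρ))) s₀ s T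
      = θ / 2 + M ^ m * T / ρ ^ 2 * ((s - s₀) ^ 2 + (2 * L + 1) * T) := by
        rw [IsDegenerateParabolic.barrier]
        field_simp
    _ ≤ θ / 2 + M ^ m * T / ρ ^ 2 * (1 + (2 * L + 1) * T) := by
        gcongr
        exact (sq_le_one_iff_abs_le_one _).2 (abs_sub_comm s s₀ ▸ mem_Icc_iff_abs_le.2 hs)
    _ ≤ θ := by linarith

-- If `w s₀ t - w' s₀ t > σ`, then `z_ss ≥ σ / 2` near `s₀` for `z` the difference of the
-- potentials, so that a second difference of `z` is bounded below, whereas `z` itself is small.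
theorem exists_forall_abs_sub_le_of_integral_le (hm : 1 < m) (hM : 0 < M) {t σ : ℝ} (ht : 0 < t)
    (hσ : 0 < σ) : ∃ ρ > 0, ∃ η > 0, ∀ w w' w₀ w₀',
      IsIntegratedSolution m w w₀ → IsIntegratedSolution m w' w₀' →
      (∀ s, w₀ s ≤ M) → (∀ s, w₀' s ≤ M) → ∀ s₀,
      ∫ y in (s₀ - ρ)..(s₀ + ρ), |w₀ y - w₀' y| ≤ η → |w s₀ t - w' s₀ t| ≤ σ := by
  obtain ⟨δ, hδ, hmodulus⟩ := exists_forall_abs_sub_le hm hM.le ht (by positivity : 0 < σ / 4)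
  obtain ⟨ρ, hρ, η, hη, hpotential⟩ := exists_forall_abs_timePotential_sub_add_le hm.le hM ht
    (by have := hδ.1; positivity : 0 < σ * δ ^ 2 / 9)
  suffices hle : ∀ w w' w₀ w₀', IsIntegratedSolution m w w₀ → IsIntegratedSolution m w' w₀' →
      (∀ s, w₀ s ≤ M) → (∀ s, w₀' s ≤ M) → ∀ s₀,
      ∫ y in (s₀ - ρ)..(s₀ + ρ), |w₀ y - w₀' y| ≤ η → w s₀ t - w' s₀ t ≤ σ by
    refine ⟨ρ, hρ, η, hη, fun w w' w₀ w₀' h h' hM₀ hM₀' s₀ hint => abs_sub_le_iff.2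
      ⟨hle w w' w₀ w₀' h h' hM₀ hM₀' s₀ hint, hle w' w w₀' w₀ h' h hM₀' hM₀ s₀ ?_⟩⟩
    simpa only [abs_sub_comm] using hint
  intro w w' w₀ w₀' h h' hM₀ hM₀' s₀ hint
  by_contra! hgap
  have hosc := fun s hs => abs_le.1 <|
    hmodulus w w₀ h (fun y => h.le_of_initial_le hm.le hM₀ y ht) s s₀ hs
  have hosc' := fun s hs => abs_le.1 <|
    hmodulus w' w₀' h' (fun y => h'.le_of_initial_le hm.le hM₀' y ht) s s₀ hs
  have hsmall := fun s hs => abs_le.1 (hpotential w w' w₀ w₀' h h' hM₀ hM₀' s₀ hint s hs)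
  have hw₀ : Continuous (fun y => w₀ y - w₀' y) := h.continuous_initial.sub h'.continuous_initial
  have hlarge := (h.hasSecondDeriv_timePotential_sub_add h' ht
    (hasSecondDeriv_doublePrimitive hw₀ s₀)).mul_sq_le_second_difference
    (κ := σ / 2) (x := s₀) hδ.1.le fun s hs => by
      have hs' : |s - s₀| ≤ δ := abs_sub_comm s s₀ ▸ mem_Icc_iff_abs_le.2 hs
      linarith [(hosc s hs').1, (hosc' s hs').2]
  have hright := hsmall (s₀ + δ) ⟨by linarith [hδ.1], by linarith [hδ.2]⟩
  have hleft := hsmall (s₀ - δ) ⟨by linarith [hδ.2], by linarith [hδ.1]⟩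
  have hmid := hsmall s₀ ⟨by linarith, by linarith⟩
  have hpos : 0 < σ * δ ^ 2 := mul_pos hσ (pow_pos hδ.1 2)
  linarith [hright.2, hleft.2, hmid.1]

end IsIntegratedSolution

/-! ### Long-time behaviour -/

theorem exists_forall_abs_comp_mul_sub_le {g : ℝ → ℝ} {a b M : ℝ} (hnonneg : ∀ s, 0 ≤ g s)
    (hM : ∀ s, g s ≤ M) (hbot : Tendsto g atBot (𝓝 a)) (htop : Tendsto g atTop (𝓝 b)) {κ ε : ℝ}
    (hκ : 0 < κ) (hε : 0 < ε) :
    ∃ Λ > 0, ∀ l ≥ Λ, ∀ k ≥ Λ, ∀ y,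
      |g (l * y) - g (k * y)| ≤ ε + indicator (Icc (-κ) κ) (fun _ => M) y := by
  have hfar {F : Filter ℝ} {c : ℝ} (hF : Tendsto g F (𝓝 c)) : ∀ᶠ s in F, dist (g s) c < ε / 2 :=
    Metric.tendsto_nhds.1 hF _ (half_pos hε)
  have hκtop : Tendsto (fun l => l * κ) atTop atTop := tendsto_id.atTop_mul_const hκ
  obtain ⟨Λ, ⟨hleft, hright⟩, hΛ⟩ := (((tendsto_neg_atTop_atBot.comp hκtop).eventually
    (eventually_forall_le_atBot.2 (hfar hbot))).and
    (hκtop.eventually (eventually_forall_ge_atTop.2 (hfar htop)))).and (eventually_gt_atTop 0)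
    |>.exists
  have hclose {c x y : ℝ} (hx : dist (g x) c < ε / 2) (hy : dist (g y) c < ε / 2) :
      |g x - g y| ≤ ε := by
    rw [← Real.dist_eq]
    linarith [dist_triangle_right (g x) (g y) c]
  refine ⟨Λ, hΛ, fun l hl k hk y => ?_⟩
  by_cases hy : y ∈ Icc (-κ) κ
  · rw [indicator_of_mem hy, abs_sub_le_iff]
    constructor <;> linarith [hnonneg (l * y), hnonneg (k * y), hM (l * y), hM (k * y)]
  · rw [indicator_of_notMem hy, add_zero]
    rcases lt_or_ge y (-κ) with hy' | hy'
    · have hmul {l : ℝ} (hl : Λ ≤ l) : l * y ≤ -(Λ * κ) := by nlinarith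
      exact hclose (hleft _ (hmul hl)) (hleft _ (hmul hk))
    · have hκy : κ < y := not_le.1 fun h => hy ⟨hy', h⟩
      have hmul {l : ℝ} (hl : Λ ≤ l) : Λ * κ ≤ l * y := by nlinarith
      exact hclose (hright _ (hmul hl)) (hright _ (hmul hk))

-- The bound is uniform in `ξ`: the rescalings of `g` converge locally uniformly away from the
-- origin and stay bounded near it.
theorem exists_forall_integral_abs_comp_mul_sub_le {g : ℝ → ℝ} {a b M : ℝ} (hg : Continuous g)
    (hnonneg : ∀ s, 0 ≤ g s) (hM0 : 0 < M) (hM : ∀ s, g s ≤ M) (hbot : Tendsto g atBot (𝓝 a))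
    (htop : Tendsto g atTop (𝓝 b)) {ρ η : ℝ} (hρ : 0 < ρ) (hη : 0 < η) :
    ∃ Λ > 0, ∀ l ≥ Λ, ∀ k ≥ Λ, ∀ ξ,
      ∫ y in (ξ - ρ)..(ξ + ρ), |g (l * y) - g (k * y)| ≤ η := by
  obtain ⟨κ, hκ, hκη⟩ : ∃ κ > 0, κ * (4 * M) = η :=
    ⟨η / (4 * M), by positivity, div_mul_cancel₀ _ (by positivity)⟩
  obtain ⟨ε, hε, hεη⟩ : ∃ ε > 0, ε * (4 * ρ) = η :=
    ⟨η / (4 * ρ), by positivity, div_mul_cancel₀ _ (by positivity)⟩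
  obtain ⟨Λ, hΛ, hpt⟩ := exists_forall_abs_comp_mul_sub_le hnonneg hM hbot htop hκ hε
  refine ⟨Λ, hΛ, fun l hl k hk ξ => ?_⟩
  have hind : Integrable (indicator (Icc (-κ) κ) fun _ => M) :=
    (integrable_indicator_iff measurableSet_Icc).2 (integrableOn_const measure_Icc_lt_top.ne)
  have hξ : ξ - ρ ≤ ξ + ρ := by linarith
  calc ∫ y in (ξ - ρ)..(ξ + ρ), |g (l * y) - g (k * y)|
      ≤ ∫ y in (ξ - ρ)..(ξ + ρ),
          (ε + indicator (Icc (-κ) κ) (fun _ => M) y) :=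
        intervalIntegral.integral_mono_on hξ
          (Continuous.intervalIntegrable (by fun_prop) _ _)
          (intervalIntegrable_const.add hind.intervalIntegrable) fun y _ => hpt l hl k hk y
    _ = η / 2 + ∫ y in (ξ - ρ)..(ξ + ρ),
          indicator (Icc (-κ) κ) (fun _ => M) y := by
        rw [intervalIntegral.integral_add intervalIntegrable_const hind.intervalIntegrable,
          intervalIntegral.integral_const, smul_eq_mul]
        linarith
    _ ≤ η / 2 + ∫ y, indicator (Icc (-κ) κ) (fun _ => M) y := by
        rw [intervalIntegral.integral_of_le hξ]
        exact add_le_add le_rfl (setIntegral_le_integral hind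
          (ae_of_all _ (indicator_nonneg fun _ _ => hM0.le)))
    _ = η := by
        rw [integral_indicator_const _ measurableSet_Icc, smul_eq_mul,
          Real.volume_real_Icc_of_le (by linarith)]
        linarith

namespace IsIntegratedSolution

variable {m a b : ℝ} {w : ℝ → ℝ → ℝ} {w₀ : ℝ → ℝ}

theorem parabolicRescale (h : IsIntegratedSolution m w w₀) {l : ℝ} (hl : 0 < l) :
    IsIntegratedSolution m (fun s t => w (l * s) (l ^ 2 * t)) (fun s => w₀ (l * s)) := by
  simpa using h.scale one_pos (pow_pos hl 2) (l := l) (by simp) 0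

theorem tendsto_of_tendsto_initial (h : IsIntegratedSolution m w w₀) (hm : 1 < m)
    {F : Filter ℝ} [F.NeBot] [F.IsCountablyGenerated]
    (hF : ∀ y, Tendsto (fun s => s + y) F F) (hlim : Tendsto w₀ F (𝓝 a)) {t : ℝ} (ht : 0 < t) :
    Tendsto (fun s => w s t) F (𝓝 a) := by
  obtain ⟨M, hM, hw₀⟩ := h.exists_pos_forall_initial_le (by linarith)
  have ha : 0 ≤ a := ge_of_tendsto' hlim (h.initial_nonneg (by linarith))
  have haM : a ≤ M := le_of_tendsto' hlim hw₀
  have hwindow (ρ : ℝ) : Tendsto (fun s => ∫ y in (s - ρ)..(s + ρ), |w₀ y - a|) F (𝓝 0) := by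
    have hshift (s : ℝ) :
        ∫ y in (s - ρ)..(s + ρ), |w₀ y - a| = ∫ y in (-ρ)..ρ, |w₀ (s + y) - a| := by
      rw [intervalIntegral.integral_comp_add_left (fun y => |w₀ y - a|), sub_eq_add_neg]
    simp only [hshift]
    rw [← intervalIntegral.integral_zero (a := -ρ) (b := ρ) (μ := volume)]
    refine intervalIntegral.tendsto_integral_filter_of_dominated_convergence (fun _ => M)
      (.of_forall fun s => ?_) (.of_forall fun s => ae_of_all _ fun y _ => ?_)
      intervalIntegrable_const (ae_of_all _ fun y _ => ?_)
    · have := h.continuous_initial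
      exact Continuous.aestronglyMeasurable (by fun_prop)
    · rw [norm_eq_abs, abs_abs]
      exact abs_sub_le_iff.2 ⟨by linarith [hw₀ (s + y)],
        by linarith [h.initial_nonneg (by linarith) (s + y)]⟩
    · simpa using ((hlim.comp (hF y)).sub_const a).abs
  rw [Metric.tendsto_nhds]
  intro σ hσ
  obtain ⟨ρ, -, η, hη, hstable⟩ := exists_forall_abs_sub_le_of_integral_le hm hM ht (half_pos hσ)
  filter_upwards [(hwindow ρ).eventually_le_const hη] with s hs
  exact (hstable w _ w₀ _ h (const ha) hw₀ (fun _ => haM) s hs).trans_lt (half_lt_self hσ)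

theorem continuous_space (h : IsIntegratedSolution m w w₀) (hm : 1 < m) {t : ℝ}
    (ht : 0 < t) : Continuous (fun s => w s t) := by
  obtain ⟨M, hM, hw₀⟩ := h.exists_pos_forall_initial_le (by linarith)
  rw [Metric.continuous_iff]
  intro x σ hσ
  obtain ⟨δ, hδ, hmodulus⟩ := exists_forall_abs_sub_le hm hM.le ht (half_pos hσ)
  exact ⟨δ, hδ.1, fun s hs => (hmodulus w w₀ h (fun y => h.le_of_initial_le hm.le hw₀ y ht) s x
    hs.le).trans_lt (half_lt_self hσ)⟩

theorem uniformCauchySeqOn_parabolicRescale (h : IsIntegratedSolution m w w₀) (hm : 1 < m)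
    (hbot : Tendsto w₀ atBot (𝓝 a)) (htop : Tendsto w₀ atTop (𝓝 b)) :
    UniformCauchySeqOn (fun l ξ => w (l * ξ) (l ^ 2)) atTop univ := by
  obtain ⟨M, hM, hw₀⟩ := h.exists_pos_forall_initial_le (by linarith)
  rw [Metric.uniformCauchySeqOn_iff]
  intro σ hσ
  obtain ⟨ρ, hρ, η, hη, hstable⟩ :=
    exists_forall_abs_sub_le_of_integral_le hm hM one_pos (half_pos hσ)
  obtain ⟨Λ, hΛ, hint⟩ := exists_forall_integral_abs_comp_mul_sub_le h.continuous_initial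
    (h.initial_nonneg (by linarith)) hM hw₀ hbot htop hρ hη
  refine ⟨Λ, fun l hl k hk ξ _ => ?_⟩
  have := hstable _ _ _ _ (h.parabolicRescale (hΛ.trans_le hl))
    (h.parabolicRescale (hΛ.trans_le hk)) (fun _ => hw₀ _) (fun _ => hw₀ _) ξ (hint l hl k hk ξ)
  simp only [mul_one] at this
  exact this.trans_lt (half_lt_self hσ)

theorem exists_profile (h : IsIntegratedSolution m w w₀) (hm : 1 < m)
    (hbot : Tendsto w₀ atBot (𝓝 a)) (htop : Tendsto w₀ atTop (𝓝 b)) :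
    ∃ f : ℝ → ℝ, Continuous f ∧ (∀ ξ, 0 ≤ f ξ) ∧ Tendsto f atBot (𝓝 a) ∧ Tendsto f atTop (𝓝 b) ∧
      TendstoUniformly (fun l ξ => w (l * ξ) (l ^ 2)) f atTop := by
  have hCauchy := h.uniformCauchySeqOn_parabolicRescale hm hbot htop
  choose f hf using fun ξ => cauchySeq_tendsto_of_complete (hCauchy.cauchySeq (mem_univ ξ))
  have hunif : TendstoUniformly (fun l ξ => w (l * ξ) (l ^ 2)) f atTop :=
    tendstoUniformlyOn_univ.1 (hCauchy.tendstoUniformlyOn_of_tendsto fun ξ _ => hf ξ)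
  have hcont {l : ℝ} (hl : 0 < l) : Continuous fun ξ => w (l * ξ) (l ^ 2) :=
    (h.continuous_space hm (pow_pos hl 2)).comp (continuous_const_mul l)
  refine ⟨f, hunif.continuous ((eventually_gt_atTop 0).mono fun l => hcont).frequently,
    fun ξ => ge_of_tendsto' (hf ξ) fun l => h.nonneg _ _,
    hunif.tendsto_of_eventually_tendsto ((eventually_gt_atTop 0).mono fun l hl => ?_)
      tendsto_const_nhds,
    hunif.tendsto_of_eventually_tendsto ((eventually_gt_atTop 0).mono fun l hl => ?_)
      tendsto_const_nhds, hunif⟩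
  · exact (h.tendsto_of_tendsto_initial hm
      (fun y => tendsto_atBot_add_const_right _ y tendsto_id) hbot (pow_pos hl 2)).comp
      (tendsto_id.const_mul_atBot hl)
  · exact (h.tendsto_of_tendsto_initial hm
      (fun y => tendsto_atTop_add_const_right _ y tendsto_id) htop (pow_pos hl 2)).comp
      (tendsto_id.const_mul_atTop hl)

end IsIntegratedSolution

/-! ### The logarithmic variable -/

theorem integral_exp_exp (g : ℝ → ℝ) {a b : ℝ} (hab : a ≤ b) :
    ∫ r in (exp a)..(exp b), g r = ∫ s in a..b, g (exp s) * exp s := by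
  rw [intervalIntegral.integral_of_le (exp_le_exp.2 hab), intervalIntegral.integral_of_le hab,
    ← image_exp_Ioc, integral_image_eq_integral_abs_deriv_smul measurableSet_Ioc
      (fun s _ => (hasDerivAt_exp s).hasDerivWithinAt) exp_injective.injOn]
  simp [mul_comm]

/-- The radial function `r ↦ q (log r) / r ^ n`, extended by `0` to `r = 0`. It is even, as
`Real.log` is `log |r|` for `r < 0`. -/
def logLift (q : ℝ → ℝ) (n : ℕ) (r : ℝ) : ℝ :=
  if r = 0 then 0 else q (log r) / r ^ n

section LogLift

variable {q : ℝ → ℝ}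

theorem logLift_exp (q : ℝ → ℝ) (n : ℕ) (s : ℝ) : logLift q n (exp s) = q s / exp s ^ n := by
  simp [logLift]

theorem logLift_eventuallyEq_zero (hq : HasCompactSupport q) (n : ℕ) : logLift q n =ᶠ[𝓝 0] 0 := by
  have hbot : ∀ᶠ s in atBot, q s = 0 :=
    (hasCompactSupport_iff_eventuallyEq.1 hq).filter_mono
      (coclosedCompact_eq_cocompact (X := ℝ) ▸ atBot_le_cocompact)
  filter_upwards [eventually_nhdsWithin_iff.1 (tendsto_log_nhdsNE_zero.eventually hbot)] with r hr
  by_cases h0 : r = 0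
  · simp [logLift, h0]
  · simp [logLift, h0, hr h0]

theorem hasDerivAt_logLift (hq : Differentiable ℝ q) (hqc : HasCompactSupport q) (n : ℕ) (r : ℝ) :
    HasDerivAt (logLift q n) (logLift (fun s => deriv q s - n * q s) (n + 1) r) r := by
  rcases eq_or_ne r 0 with rfl | hr
  · simpa [logLift] using
      (hasDerivAt_const (0 : ℝ) (0 : ℝ)).congr_of_eventuallyEq (logLift_eventuallyEq_zero hqc n)
  have hquot := ((hq (log r)).hasDerivAt.comp r (hasDerivAt_log hr)).div (hasDerivAt_pow n r)
    (pow_ne_zero n hr)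
  refine (hquot.congr_of_eventuallyEq ?_).congr_deriv ?_
  · filter_upwards [eventually_ne_nhds hr] with x hx
    simp [logLift, hx]
  · rcases n with _ | n
    · simp [logLift, hr, div_eq_mul_inv]
    · simp only [logLift, hr, if_false, Function.comp_apply, Nat.add_sub_cancel]
      field_simp
      ring

theorem continuous_logLift (hq : Continuous q) (hqc : HasCompactSupport q) (n : ℕ) :
    Continuous (logLift q n) := by
  refine continuous_iff_continuousAt.2 fun r => ?_
  rcases eq_or_ne r 0 with rfl | hr
  · exact continuousAt_const.congr (logLift_eventuallyEq_zero hqc n).symm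
  · have hquot : ContinuousAt (fun x => q (log x) / x ^ n) r :=
      (hq.continuousAt.comp (continuousAt_log hr)).div (continuousAt_id.pow n) (pow_ne_zero n hr)
    refine hquot.congr ?_
    filter_upwards [eventually_ne_nhds hr] with x hx
    simp [logLift, hx]

end LogLift

namespace IsRadialVeryWeakSolution

variable {N : ℕ} {m T : ℝ} {v : ℝ → ℝ → ℝ} {v₀ q : ℝ → ℝ}

theorem continuousOn_exp (h : IsRadialVeryWeakSolution N m v v₀) :
    ContinuousOn (fun p : ℝ × ℝ => v (exp p.1) p.2) (univ ×ˢ Ioi 0) :=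
  h.2.1.comp (f := fun p : ℝ × ℝ => (exp p.1, p.2)) (by fun_prop)
    fun p hp => ⟨(exp_pos p.1).le, hp.2⟩

theorem continuousOn_space (h : IsRadialVeryWeakSolution N m v v₀) {t : ℝ} (ht : 0 < t) :
    ContinuousOn (v · t) (Ici 0) :=
  h.2.1.comp (f := fun r : ℝ => (r, t)) (by fun_prop) fun _ hr => ⟨hr, ht⟩

theorem exists_norm_rpow_exp_le (h : IsRadialVeryWeakSolution N m v v₀) (hm : 0 ≤ m)
    (hT : 0 < T) : ∃ C, ∀ s, ∀ t ∈ Ioc 0 T, ‖v (exp s) t ^ m‖ ≤ C := by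
  obtain ⟨C, hC⟩ := h.2.2.1 T hT
  refine ⟨C ^ m, fun s t ht => ?_⟩
  rw [norm_of_nonneg (rpow_nonneg (h.1 _ _) m)]
  exact rpow_le_rpow (h.1 _ _) (hC _ (exp_pos s).le t (Ioc_subset_Icc_self ht)) hm

theorem continuous_timePotential_exp (h : IsRadialVeryWeakSolution N m v v₀) (hm : 0 ≤ m)
    (hT : 0 < T) : Continuous fun s => timePotential m (fun s t => v (exp s) t) s T := by
  obtain ⟨C, hC⟩ := h.exists_norm_rpow_exp_le hm hT
  have hcont : ContinuousOn (fun p : ℝ × ℝ => v (exp p.1) p.2 ^ m) (univ ×ˢ Ioi 0) :=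
    h.continuousOn_exp.rpow_const fun _ _ => Or.inr hm
  refine intervalIntegral.continuous_of_dominated_interval (bound := fun _ => C) (fun s => ?_)
    (fun s => ae_of_all _ fun t ht => ?_) intervalIntegrable_const (ae_of_all _ fun t ht => ?_) <;>
    rw [uIoc_of_le hT.le] at *
  · exact (hcont.comp (f := fun t : ℝ => (s, t)) (by fun_prop)
      fun t ht => ⟨mem_univ s, ht.1⟩).aestronglyMeasurable measurableSet_Ioc
  · exact hC s t ht
  · exact continuousOn_univ.1 (hcont.comp (f := fun s : ℝ => (s, t)) (by fun_prop)
      fun s _ => ⟨mem_univ s, ht.1⟩)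

theorem integral_timePotential_exp_mul (h : IsRadialVeryWeakSolution N m v v₀) (hm : 0 ≤ m)
    (hT : 0 < T) (hq : Continuous q) {a b : ℝ} (hab : a ≤ b) :
    ∫ s in a..b, timePotential m (fun s t => v (exp s) t) s T * q s =
      ∫ t in (0 : ℝ)..T, ∫ s in a..b, v (exp s) t ^ m * q s := by
  rw [intervalIntegral_intervalIntegral_swap]
  · simp only [timePotential, intervalIntegral.integral_mul_const]
  rw [uIoc_of_le hT.le, uIoc_of_le hab]
  obtain ⟨C, hC⟩ := h.exists_norm_rpow_exp_le hm hT
  obtain ⟨B, hB⟩ := (isCompact_Icc (a := a) (b := b)).exists_bound_of_continuousOn hq.continuousOn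
  have hmeas : MeasurableSet (Ioc 0 T ×ˢ Ioc a b) := measurableSet_Ioc.prod measurableSet_Ioc
  have hcont : ContinuousOn (fun p : ℝ × ℝ => v (exp p.2) p.1 ^ m * q p.2)
      (Ioc 0 T ×ˢ Ioc a b) :=
    ((h.continuousOn_exp.rpow_const fun _ _ => Or.inr hm).comp (f := Prod.swap) (by fun_prop)
      fun p hp => ⟨mem_univ _, hp.1.1⟩).mul (hq.comp continuous_snd).continuousOn
  refine IntegrableOn.of_bound (C := C * B) ?_ (hcont.aestronglyMeasurable hmeas) ?_
  · rw [Measure.volume_eq_prod, Measure.prod_prod]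
    exact ENNReal.mul_lt_top (by simp) (by simp)
  · filter_upwards [ae_restrict_mem hmeas] with p hp
    rw [Function.uncurry, norm_mul]
    have hCp := hC p.2 p.1 hp.1
    exact mul_le_mul hCp (hB _ (Ioc_subset_Icc_self hp.2)) (norm_nonneg _)
      ((norm_nonneg _).trans hCp)

theorem integral_integral_of_stationary (h : IsRadialVeryWeakSolution 2 m v v₀) (hT : 0 < T)
    {φ φ' φ'' : ℝ → ℝ} (hφ : ∀ r, HasDerivAt φ (φ' r) r) (hφ' : ∀ r, HasDerivAt φ' (φ'' r) r)
    (hφ'' : Continuous φ'') (hφ0 : ∀ r, 0 ≤ φ r) {r₁ r₂ : ℝ} (hr₁ : 0 < r₁) (hr : r₁ < r₂)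
    (h₁ : φ r₁ = 0 ∧ φ' r₁ = 0) (h₂ : φ r₂ = 0 ∧ φ' r₂ = 0) :
    ∫ t in (0 : ℝ)..T, ∫ r in r₁..r₂, (φ'' r + φ' r / r) * v r t ^ m * r =
      ∫ r in r₁..r₂, (v r T - v₀ r) * φ r / r := by
  have hcont {p p' : ℝ → ℝ} (hp : ∀ r, HasDerivAt p (p' r) r) : Continuous p :=
    continuous_iff_continuousAt.2 fun r => (hp r).continuousAt
  have hweak := h.2.2.2 r₁ r₂ T (fun r _ => φ r) (fun _ _ => 0) (fun r _ => φ' r)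
    (fun r _ => φ'' r) hr₁ hr hT (fun r _ => hφ0 r) (fun _ t => hasDerivAt_const t _)
    (fun r _ => hφ r) (fun r _ => hφ' r) ((hcont hφ).comp continuous_fst) continuous_const
    ((hcont hφ').comp continuous_fst) (hφ''.comp continuous_fst) (fun _ _ => ⟨h₁.1, h₂.1⟩)
  have hN : ((2 : ℕ) : ℝ) - 1 = 1 := by norm_num
  simp only [hN, rpow_one, h₁.2, h₂.2, mul_zero, sub_zero, intervalIntegral.integral_zero,
    add_zero, zero_add, one_div_mul_eq_div] at hweak
  rw [hweak]
  refine intervalIntegral.integral_congr fun r hr' => ?_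
  have hr0 : 0 < r := hr₁.trans_le (uIcc_of_le hr.le ▸ hr').1
  simp only [rpow_neg hr0.le, rpow_two]
  field_simp

theorem integral_integral_rpow_exp_mul_deriv_deriv (h : IsRadialVeryWeakSolution 2 m v v₀)
    (hT : 0 < T) (hq : ContDiff ℝ 2 q)
    (hq0 : ∀ s, 0 ≤ q s) {a b : ℝ} (hab : a < b) (hqs : tsupport q ⊆ Ioo a b) :
    ∫ t in (0 : ℝ)..T, ∫ s in a..b, v (exp s) t ^ m * deriv (deriv q) s =
      ∫ s in a..b, (v (exp s) T - v₀ (exp s)) * q s := by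
  have hqc : HasCompactSupport q :=
    isCompact_Icc.of_isClosed_subset (isClosed_tsupport q) (hqs.trans Ioo_subset_Icc_self)
  have hzero {x : ℝ} (hx : x ∉ Ioo a b) : q x = 0 ∧ deriv q x = 0 :=
    ⟨image_eq_zero_of_notMem_tsupport fun h => hx (hqs h),
      image_eq_zero_of_notMem_tsupport fun h => hx (hqs (tsupport_deriv_subset h))⟩
  have hq₁ : ContDiff ℝ 1 (deriv q) := hq.deriv'
  have hq₂ : Continuous fun s => deriv (deriv q) s - deriv q s :=
    (hq₁.continuous_deriv le_rfl).sub hq₁.continuous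
  have hφ (r : ℝ) : HasDerivAt (logLift q 0) (logLift (deriv q) 1 r) r := by
    simpa using hasDerivAt_logLift (hq.differentiable two_ne_zero) hqc 0 r
  have hφ' (r : ℝ) : HasDerivAt (logLift (deriv q) 1)
      (logLift (fun s => deriv (deriv q) s - deriv q s) 2 r) r := by
    simpa using hasDerivAt_logLift (hq₁.differentiable one_ne_zero) hqc.deriv 1 r
  have hφ'' := continuous_logLift hq₂ (hqc.deriv.deriv.sub hqc.deriv) 2
  have hweak := h.integral_integral_of_stationary hT hφ hφ' hφ''
    (fun r => by unfold logLift; split_ifs <;> simp [hq0]) (exp_pos a) (exp_lt_exp.2 hab)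
    (by simp [logLift_exp, hzero]) (by simp [logLift_exp, hzero])
  simp only [integral_exp_exp _ hab.le, logLift_exp] at hweak
  convert hweak using 3 with t s
  · congr! 2 with s
    field_simp
    ring
  · field_simp

theorem hasSecondDeriv_timePotential_exp (h : IsRadialVeryWeakSolution 2 m v v₀) (hm : 0 ≤ m)
    (hT : 0 < T) (hv₀ : ContinuousOn v₀ (Ioi 0)) :
    HasSecondDeriv (timePotential m (fun s t => v (exp s) t) · T)
      (fun s => v (exp s) T - v₀ (exp s)) := by
  have hg : Continuous fun s => v (exp s) T - v₀ (exp s) :=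
    ((h.continuousOn_space hT).comp_continuous continuous_exp fun s => (exp_pos s).le).sub
      (hv₀.comp_continuous continuous_exp exp_pos)
  refine hasSecondDeriv_of_integral_mul_deriv_deriv (h.continuous_timePotential_exp hm hT) hg
    fun q hq hqc hq0 => ?_
  obtain ⟨R, hR, hqR⟩ := hqc.isCompact.isBounded.subset_ball_lt 0 0
  rw [Real.ball_eq_Ioo, zero_sub, zero_add] at hqR
  have hfull {u p : ℝ → ℝ} (hp : tsupport p ⊆ tsupport q) :
      ∫ s in (-R)..R, u s * p s = ∫ s, u s * p s :=
    intervalIntegral.integral_eq_integral_of_support_subset <|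
      (Function.support_mul_subset_right u p).trans <|
        ((subset_tsupport p).trans (hp.trans hqR)).trans Ioo_subset_Ioc_self
  rw [← hfull (tsupport_deriv_subset.trans tsupport_deriv_subset), ← hfull subset_rfl,
    h.integral_timePotential_exp_mul hm hT ((hq.deriv' (n := 1)).continuous_deriv le_rfl)
      (by linarith), h.integral_integral_rpow_exp_mul_deriv_deriv hT hq hq0 (by linarith) hqR]

theorem isIntegratedSolution_exp (h : IsRadialVeryWeakSolution 2 m v v₀) (hm : 0 ≤ m)
    (hv₀ : ContinuousOn v₀ (Ioi 0)) :
    IsIntegratedSolution m (fun s t => v (exp s) t) (fun s => v₀ (exp s)) where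
  nonneg _ _ := h.1 _ _
  continuousOn_time s := h.continuousOn_exp.comp (f := fun t : ℝ => (s, t)) (by fun_prop)
    fun t ht => ⟨mem_univ s, ht⟩
  bounded T hT :=
    let ⟨C, hC⟩ := h.2.2.1 T hT
    ⟨C, fun s t ht => hC _ (exp_pos s).le t (Ioc_subset_Icc_self ht)⟩
  continuous_initial := hv₀.comp_continuous continuous_exp exp_pos
  hasSecondDeriv _ ht := h.hasSecondDeriv_timePotential_exp hm ht hv₀

theorem apply_zero (h : IsRadialVeryWeakSolution 2 m v v₀) (hm : 1 < m)
    (hv₀ : ContinuousOn v₀ (Ioi 0)) {K : ℝ} (hv₀K : Tendsto v₀ (𝓝[>] 0) (𝓝 K))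
    {t : ℝ} (ht : 0 < t) : v 0 t = K := by
  have hw := (h.isIntegratedSolution_exp (by linarith) hv₀).tendsto_of_tendsto_initial hm
    (fun y => tendsto_atBot_add_const_right _ y tendsto_id)
    (hv₀K.comp tendsto_exp_atBot_nhdsGT) ht
  have hv : Tendsto (v · t) (𝓝[>] 0) (𝓝 (v 0 t)) :=
    (h.continuousOn_space ht 0 self_mem_Ici).mono_left (nhdsWithin_mono 0 Ioi_subset_Ici_self)
  exact tendsto_nhds_unique (hv.comp tendsto_exp_atBot_nhdsGT) hw

end IsRadialVeryWeakSolution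

/-! ### Convergence to the profile -/

theorem tendsto_iSup_abs_sub_comp_log_div_sqrt {v : ℝ → ℝ → ℝ} {f : ℝ → ℝ} {K : ℝ}
    (hK : ∀ t > 0, v 0 t = K)
    (hf : TendstoUniformly (fun l ξ => v (exp (l * ξ)) (l ^ 2)) f atTop) :
    Tendsto (fun t : ℝ => ⨆ r : {r : ℝ // 0 ≤ r},
      |v r.1 t - (if r.1 = 0 then K else f (Real.log r.1 / Real.sqrt t))|) atTop (𝓝 0) := by
  rw [Metric.tendsto_nhds]
  intro σ hσ
  filter_upwards [eventually_gt_atTop 0,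
    tendsto_sqrt_atTop.eventually (Metric.tendstoUniformly_iff.1 hf _ (half_pos hσ))] with t ht hft
  have hsqrt : √t ≠ 0 := (sqrt_pos.2 ht).ne'
  rw [dist_zero_right, norm_of_nonneg (iSup_nonneg fun _ => abs_nonneg _)]
  refine (Real.iSup_le (fun ⟨r, hr⟩ => ?_) (half_pos hσ).le).trans_lt (half_lt_self hσ)
  rcases hr.eq_or_lt with rfl | hr
  · simpa [hK t ht] using (half_pos hσ).le
  · have hdist := (hft (log r / √t)).le
    rw [mul_div_cancel₀ _ hsqrt, sq_sqrt ht.le, exp_log hr, dist_comm,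
      Real.dist_eq] at hdist
    simpa [hr.ne'] using hdist

theorem asymptotics_N2_positive_data_general {m K b : ℝ} (hm : 1 < m) {v : ℝ → ℝ → ℝ}
    {v₀ : ℝ → ℝ} (hsol : IsRadialVeryWeakSolution 2 m v v₀)
    (hv₀cont : ContinuousOn v₀ (Ioi 0)) (hv₀K : Tendsto v₀ (𝓝[>] 0) (𝓝 K))
    (hv₀lim : Tendsto v₀ atTop (𝓝 b)) :
    ∃ f : ℝ → ℝ, Continuous f ∧ (∀ ξ, 0 ≤ f ξ) ∧
      Tendsto f atBot (𝓝 K) ∧ Tendsto f atTop (𝓝 b) ∧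
      Tendsto (fun t : ℝ => ⨆ r : {r : ℝ // 0 ≤ r},
          |v r.1 t - (if r.1 = 0 then K else f (Real.log r.1 / Real.sqrt t))|)
        atTop (𝓝 0) ∧
      (∀ t : ℝ, 0 < t → v 0 t = K) := by
  have hw := hsol.isIntegratedSolution_exp (zero_lt_one.trans hm).le hv₀cont
  obtain ⟨f, hfcont, hf0, hfbot, hftop, hunif⟩ := hw.exists_profile hm
    (hv₀K.comp tendsto_exp_atBot_nhdsGT) (hv₀lim.comp tendsto_exp_atTop)
  have hzero (t : ℝ) (ht : 0 < t) : v 0 t = K := hsol.apply_zero hm hv₀cont hv₀K ht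
  exact ⟨f, hfcont, hf0, hfbot, hftop, tendsto_iSup_abs_sub_comp_log_div_sqrt hzero hunif, hzero⟩

/-- **Theorem 1.2 (N = 2, `u₀(0) = K > 0`).** Let `m > 1` and let `u` (radial
representative `v`) be a radial very weak solution of `|x|^{-2} ∂ₜ u = Δ(u^m)` in
`ℝ² × (0,∞)` with radially symmetric datum `u₀ ∈ L^∞ ∩ C`, `u₀ ≥ 0`, `u₀(0) = K > 0`
and `u₀(x) → 0` as `|x| → ∞`.  Then there is a continuous profile `f : ℝ → [0,∞)` with
`f(ξ) → K` as `ξ → -∞` and `f(ξ) → 0` as `ξ → +∞` such that, with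
`W(x,t) = f(log|x|/√t)` for `x ≠ 0` and `W(0,t) = K`, one has
`sup_{x ∈ ℝ²} |u(x,t) - W(x,t)| → 0` as `t → ∞`; in particular `u(0,t) = K` for all
`t > 0`. -/
theorem asymptotics_N2_positive_data
    (m K : ℝ) (hm : 1 < m) (hK : 0 < K) (v : ℝ → ℝ → ℝ) (v₀ : ℝ → ℝ)
    (hsol : IsRadialVeryWeakSolution 2 m v v₀)
    (hv₀cont : Continuous v₀)
    (hv₀bdd : ∃ C : ℝ, ∀ r, v₀ r ≤ C)
    (hv₀nonneg : ∀ r, 0 ≤ v₀ r)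
    (hv₀K : v₀ 0 = K)
    (hv₀lim : Tendsto v₀ atTop (𝓝 0)) :
    ∃ f : ℝ → ℝ, Continuous f ∧ (∀ ξ, 0 ≤ f ξ) ∧
      Tendsto f atBot (𝓝 K) ∧ Tendsto f atTop (𝓝 0) ∧
      Tendsto (fun t : ℝ => ⨆ r : {r : ℝ // 0 ≤ r},
          |v r.1 t - (if r.1 = 0 then K else f (Real.log r.1 / Real.sqrt t))|)
        atTop (𝓝 0) ∧
      (∀ t : ℝ, 0 < t → v 0 t = K) := by
  exact asymptotics_N2_positive_data_general hm hsol hv₀cont.continuousOn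
    (hv₀K ▸ hv₀cont.continuousWithinAt) hv₀lim
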